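/- arXiv:2410.04669 — 8 statements merged into one kernel-verified Lean document; each statement's English description precedes it below -/
import Mathlib

section
/- Let D be a digraph, let S ⊆ E(D) be any set of arcs, and let < and ◁ be any two linear orders on V(D). Then the compositions produced by the two orders coincide: α^<_D(S) = α^◁_D(S). In other words, the composition α_D(S) is well defined, independently of the chosen labeling (linear ordering) of the vertices of D. -/
/-!
Digraph conventions: a digraph `D` on a finite vertex type `V` is given by an arc set
`E : Finset (V × V)` all of whose arcs `(u, v)` satisfy `u ≠ v`.  For an arc set `S`,
`arcGraph S` is the simple graph with edge set `S' = {{u,v} : (u,v) ∈ S}`.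
-/

open scoped Classical

noncomputable section

/-- The undirected simple graph underlying an arc set `S`: `u` and `v` are adjacent
iff `u ≠ v` and (`(u,v) ∈ S` or `(v,u) ∈ S`). -/
def arcGraph {V : Type} (S : Finset (V × V)) : SimpleGraph V :=
  SimpleGraph.fromRel (fun u v => (u, v) ∈ S)

/-- The set of connected components (as vertex subsets) of the spanning subgraph
`(V, S')`. -/
def comps {V : Type} [Fintype V] [DecidableEq V] (S : Finset (V × V)) : Finset (Finset V) :=
  Finset.univ.image (fun v => Finset.univ.filter (fun w => (arcGraph S).Reachable v w))

/-- Outdegree of a vertex with respect to an arc set: the number of arcs with first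
coordinate `w`. -/
def od {V : Type} [DecidableEq V] (E : Finset (V × V)) (w : V) : ℤ :=
  (E.filter (fun a => a.1 = w)).card

/-- Indegree of a vertex with respect to an arc set: the number of arcs with second
coordinate `w`. -/
def indeg {V : Type} [DecidableEq V] (E : Finset (V × V)) (w : V) : ℤ :=
  (E.filter (fun a => a.2 = w)).card

/-- Total degree of a vertex subset `W`: the sum of the outdegrees of its elements
minus the sum of their indegrees. -/
def td {V : Type} [DecidableEq V] (E : Finset (V × V)) (W : Finset V) : ℤ :=
  (∑ w ∈ W, od E w) - ∑ w ∈ W, indeg E w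

/-- The increasing word of the elements of the finite set `C` with respect to the
linear order `r`. -/
def word {V : Type} (r : LinearOrder V) (C : Finset V) : List V :=
  letI := r
  C.sort (· ≤ ·)

/-- The relation `⊳^r` on vertex subsets: `tri E r C C'` holds iff `td C > td C'`, or
`td C = td C'` and `|C| > |C'|`, or `td C = td C'` and `|C| = |C'|` and the increasing
word of `C` is lexicographically strictly greater than that of `C'` with respect to `r`. -/
def tri {V : Type} [DecidableEq V] (E : Finset (V × V)) (r : LinearOrder V)
    (C C' : Finset V) : Prop :=
  td E C > td E C' ∨
    (td E C = td E C' ∧ C.card > C'.card) ∨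
      (td E C = td E C' ∧ C.card = C'.card ∧ List.Lex r.lt (word r C') (word r C))

/-- The connected components of `(V, S')`, listed in decreasing `⊳^r`-order. -/
def sortedComps {V : Type} [Fintype V] [DecidableEq V]
    (E S : Finset (V × V)) (r : LinearOrder V) : List (Finset V) :=
  (comps S).toList.mergeSort (fun C C' => decide (tri E r C C' ∨ C = C'))

/-- The composition `α^r_D(S)`: the sizes of the connected components of `(V, S')`,
listed in decreasing `⊳^r`-order. -/
def alphaComp {V : Type} [Fintype V] [DecidableEq V]
    (E S : Finset (V × V)) (r : LinearOrder V) : List ℕ :=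
  (sortedComps E S r).map Finset.card

/-- The order key of a vertex subset. -/
def keyOf {V : Type} [DecidableEq V] (E : Finset (V × V)) (C : Finset V) : ℤ ×ₗ ℕ :=
  toLex (td E C, C.card)

theorem word_inj {V : Type} (r : LinearOrder V) {C C' : Finset V} (h : word r C = word r C') :
    C = C' := by
  letI := r
  ext x
  have h1 : x ∈ word r C ↔ x ∈ word r C' := by rw [h]
  simpa [word] using h1

theorem lex_iff {V : Type} (r : LinearOrder V) (a b : List V) :
    List.Lex r.lt a b ↔ (letI := r; a < b) := Iff.rfl

theorem tri_trans {V : Type} [DecidableEq V] (E : Finset (V × V)) (r : LinearOrder V)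
    {A B C : Finset V} (h1 : tri E r A B) (h2 : tri E r B C) : tri E r A C := by
  letI := r
  have h3 : List.Lex r.lt (word r C) (word r B) → List.Lex r.lt (word r B) (word r A) →
      List.Lex r.lt (word r C) (word r A) := by
    intro p q
    rw [lex_iff] at *
    exact lt_trans p q
  unfold tri at *
  rcases h1 with h1 | ⟨h1, h1'⟩ | ⟨h1, h1', h1''⟩ <;>
  rcases h2 with h2 | ⟨h2, h2'⟩ | ⟨h2, h2', h2''⟩
  all_goals first
    | (left; omega)
    | (right; left; omega)
    | exact Or.inr (Or.inr ⟨by omega, by omega, h3 h2'' h1''⟩)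

theorem tri_total {V : Type} [DecidableEq V] (E : Finset (V × V)) (r : LinearOrder V)
    (A B : Finset V) : tri E r A B ∨ A = B ∨ tri E r B A := by
  letI := r
  have h3 : List.Lex r.lt (word r A) (word r B) ∨ A = B ∨
      List.Lex r.lt (word r B) (word r A) := by
    rw [lex_iff, lex_iff]
    rcases lt_trichotomy (word r A) (word r B) with h | h | h
    · exact Or.inl h
    · exact Or.inr (Or.inl (word_inj r h))
    · exact Or.inr (Or.inr h)
  unfold tri
  rcases lt_trichotomy (td E A) (td E B) with h | h | h
  · exact Or.inr (Or.inr (Or.inl h))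
  · rcases lt_trichotomy A.card B.card with h' | h' | h'
    · exact Or.inr (Or.inr (Or.inr (Or.inl ⟨h.symm, h'⟩)))
    · rcases h3 with h3 | h3 | h3
      · exact Or.inr (Or.inr (Or.inr (Or.inr ⟨h.symm, h'.symm, h3⟩)))
      · exact Or.inr (Or.inl h3)
      · exact Or.inl (Or.inr (Or.inr ⟨h, h', h3⟩))
    · exact Or.inl (Or.inr (Or.inl ⟨h, h'⟩))
  · exact Or.inl (Or.inl h)

theorem tri_key {V : Type} [DecidableEq V] (E : Finset (V × V)) (r : LinearOrder V)
    {A B : Finset V} (h : tri E r A B ∨ A = B) : keyOf E B ≤ keyOf E A := by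
  rcases h with h | rfl
  · rw [keyOf, keyOf, Prod.Lex.toLex_le_toLex]
    rcases h with h | ⟨h, h'⟩ | ⟨h, h', _⟩
    · exact Or.inl h
    · exact Or.inr ⟨h.symm, h'.le⟩
    · exact Or.inr ⟨h.symm, h'.ge⟩
  · exact le_rfl

theorem sortedComps_key {V : Type} [Fintype V] [DecidableEq V]
    (E S : Finset (V × V)) (r : LinearOrder V) :
    ((sortedComps E S r).map (keyOf E)).Pairwise (fun a b => b ≤ a) := by
  rw [List.pairwise_map]
  have h : (sortedComps E S r).Pairwise
      (fun C C' => decide (tri E r C C' ∨ C = C') = true) := by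
    unfold sortedComps
    apply List.pairwise_mergeSort
    · intro a b c hab hbc
      simp only [decide_eq_true_eq] at *
      rcases hab with hab | rfl
      · rcases hbc with hbc | rfl
        · exact Or.inl (tri_trans E r hab hbc)
        · exact Or.inl hab
      · exact hbc
    · intro a b
      simp only [Bool.or_eq_true, decide_eq_true_eq]
      rcases tri_total E r a b with h | h | h
      · exact Or.inl (Or.inl h)
      · exact Or.inl (Or.inr h)
      · exact Or.inr (Or.inl h)
  refine h.imp ?_
  intro a b hab
  exact tri_key E r (by simpa only [decide_eq_true_eq] using hab)

/-- For a digraph `D = (V, E)` and any arc subset `S ⊆ E`, any two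
linear orders on the vertex set produce the same composition `α_D(S)`; that is,
`α_D(S)` is well defined independently of the chosen labeling of the vertices. -/
theorem alphaComp_well_defined {V : Type} [Fintype V] [DecidableEq V]
    (E : Finset (V × V)) (hE : ∀ e ∈ E, e.1 ≠ e.2)
    (S : Finset (V × V)) (hS : S ⊆ E)
    (r₁ r₂ : LinearOrder V) :
    alphaComp E S r₁ = alphaComp E S r₂ := by
  have hp : (sortedComps E S r₁).Perm (sortedComps E S r₂) :=
    (List.mergeSort_perm _ _).trans (List.mergeSort_perm _ _).symm
  have hk : (sortedComps E S r₁).map (keyOf E) = (sortedComps E S r₂).map (keyOf E) :=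
    List.Perm.eq_of_pairwise (fun a b _ _ h1 h2 => le_antisymm h2 h1)
      (sortedComps_key E S r₁) (sortedComps_key E S r₂) (hp.map _)
  have h2 := congrArg (List.map (fun p : ℤ ×ₗ ℕ => (ofLex p).2)) hk
  rw [List.map_map, List.map_map] at h2
  exact h2


end
end

section
/- Let D be a digraph with underlying undirected simple graph G. Then χ(X_D) = X_G; that is, the commutative image of the chromatic noncommutative symmetric function of D is the chromatic symmetric function of G. -/
/-!
Digraph conventions: a digraph `D` on a finite vertex type `V` is given by an arc set
`E : Finset (V × V)` all of whose arcs `(u, v)` satisfy `u ≠ v`.  For an arc set `S`,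
`arcGraph S` is the simple graph with edge set `S' = {{u,v} : (u,v) ∈ S}`.
-/

open scoped Classical

noncomputable section

/-- `NSym`, the algebra of noncommutative symmetric functions over `ℚ`, modeled as the
free associative `ℚ`-algebra on countably many noncommuting generators; the generator
indexed by `n : ℕ` is the noncommutative power sum `Ψ_{n+1}`, so that `NSym` is free
on `Ψ_1, Ψ_2, …`, with `Ψ_n` of degree `n`. -/
abbrev NSym : Type := FreeAlgebra ℚ ℕ

/-- The noncommutative power sum generator `Ψ_n` (intended for `n ≥ 1`). -/
def Psi (n : ℕ) : NSym := FreeAlgebra.ι ℚ (n - 1)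

/-- `Ψ_α` for a composition `α = (α_1, …, α_ℓ)`: the product `Ψ_{α_1} Ψ_{α_2} ⋯ Ψ_{α_ℓ}`,
with `Ψ_{()} = 1`. -/
def PsiComp (l : List ℕ) : NSym := (l.map Psi).prod

/-- The chromatic noncommutative symmetric function of the digraph with arc set `E`,
computed using the linear order `r` on the vertices:
`X_D = Σ_{S ⊆ E} (−1)^{|S|} Ψ_{α(S)}`. -/
def XD {V : Type} [Fintype V] [DecidableEq V] (E : Finset (V × V)) (r : LinearOrder V) :
    NSym :=
  ∑ S ∈ E.powerset, ((-1 : ℚ) ^ S.card) • PsiComp (alphaComp E S r)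

/-- The power sum `p_n = Σ_{i ∈ ℕ} x_i^n` in `MvPowerSeries ℕ ℚ` (intended for `n ≥ 1`). -/
def psum (n : ℕ) : MvPowerSeries ℕ ℚ :=
  fun d => if ∃ i : ℕ, d = Finsupp.single i n then 1 else 0

/-- `p_λ = p_{λ_1} ⋯ p_{λ_ℓ}` for a partition `λ = (λ_1, …, λ_ℓ)`. -/
def psumProd (l : List ℕ) : MvPowerSeries ℕ ℚ := (l.map psum).prod

/-- The forgetful morphism `χ : NSym → MvPowerSeries ℕ ℚ`, i.e. the unique `ℚ`-algebra
homomorphism with `χ(Ψ_n) = p_n` for all `n ≥ 1`. -/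
def chi : NSym →ₐ[ℚ] MvPowerSeries ℕ ℚ :=
  FreeAlgebra.lift ℚ (fun n : ℕ => psum (n + 1))

/-- A proper coloring of a simple graph: adjacent vertices receive distinct colors. -/
def Proper {V : Type} (G : SimpleGraph V) (κ : V → ℕ) : Prop :=
  ∀ u v, G.Adj u v → κ u ≠ κ v

/-- The chromatic symmetric function `X_G = Σ_κ Π_{v ∈ V} x_{κ(v)}` of a finite simple
graph `G`, as an element of `MvPowerSeries ℕ ℚ`: the coefficient of the monomial `d` is
the (finite) number of proper colorings `κ : V → ℕ` using each color `c` exactly `d c`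
times. -/
def XG {V : Type} [Fintype V] [DecidableEq V] (G : SimpleGraph V) : MvPowerSeries ℕ ℚ :=
  fun d =>
    (Nat.card {κ : V → ℕ // Proper G κ ∧
      ∀ c : ℕ, (Finset.univ.filter (fun v => κ v = c)).card = d c} : ℚ)

def cntFn {V : Type} [Fintype V] (κ : V → ℕ) : ℕ →₀ ℕ := ∑ v, Finsupp.single (κ v) 1

lemma cntFn_apply {V : Type} [Fintype V] (κ : V → ℕ) (c : ℕ) :
    cntFn κ c = (Finset.univ.filter (fun v => κ v = c)).card := by
  simp [cntFn, Finsupp.finsetSum_apply, Finsupp.single_apply]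

/-- Colorings with content `d`. -/
def Kd (V : Type) [Fintype V] (d : ℕ →₀ ℕ) : Finset (V → ℕ) :=
  (Fintype.piFinset (fun _ : V => d.support)).filter (fun κ => cntFn κ = d)

lemma mem_Kd {V : Type} [Fintype V] (d : ℕ →₀ ℕ) (κ : V → ℕ) :
    κ ∈ Kd V d ↔ cntFn κ = d := by
  simp only [Kd, Finset.mem_filter, Fintype.mem_piFinset, and_iff_right_iff_imp]
  rintro rfl v
  rw [Finsupp.mem_support_iff, cntFn_apply]
  exact Finset.card_ne_zero_of_mem (a := v) (by simp)

lemma chi_Psi {n : ℕ} (hn : 0 < n) : chi (Psi n) = psum n := by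
  obtain ⟨m, rfl⟩ := Nat.exists_eq_succ_of_ne_zero hn.ne'
  simp [chi, Psi]

lemma chi_alpha {V : Type} [Fintype V] [DecidableEq V] (E S : Finset (V × V))
    (r : LinearOrder V) :
    chi (PsiComp (alphaComp E S r)) = ∏ C ∈ comps S, psum C.card := by
  have h1 : ∀ C ∈ comps S, 0 < C.card := by
    intro C hC
    simp only [comps, Finset.mem_image] at hC
    obtain ⟨v, -, rfl⟩ := hC
    exact Finset.card_pos.mpr ⟨v, by simp⟩
  have hp : (sortedComps E S r).Perm (comps S).toList := List.mergeSort_perm _ _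
  rw [PsiComp, map_list_prod, alphaComp, List.map_map, List.map_map,
    (hp.map _).prod_eq, Finset.prod_map_toList]
  exact Finset.prod_congr rfl fun C hC => chi_Psi (h1 C hC)

lemma prod_comps {V : Type} [Fintype V] [DecidableEq V] (S : Finset (V × V))
    {M : Type} [CommMonoid M] (g : ℕ → M) :
    ∏ C ∈ comps S, g C.card = ∏ c : (arcGraph S).ConnectedComponent,
      g (Finset.univ.filter (fun v => (arcGraph S).connectedComponentMk v = c)).card := by
  symm
  refine Finset.prod_bij
    (fun c _ => Finset.univ.filter (fun v => (arcGraph S).connectedComponentMk v = c)) ?_ ?_ ?_ ?_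
  · intro c _
    induction c using SimpleGraph.ConnectedComponent.ind with | _ v =>
    simp only [comps, Finset.mem_image]
    refine ⟨v, Finset.mem_univ _, ?_⟩
    ext w
    simp [SimpleGraph.reachable_comm]
  · intro c _ c' _ h
    induction c using SimpleGraph.ConnectedComponent.ind with | _ v =>
    have : v ∈ Finset.univ.filter (fun w => (arcGraph S).connectedComponentMk w = c') := by
      rw [← h]; simp
    simpa using this
  · intro C hC
    simp only [comps, Finset.mem_image] at hC
    obtain ⟨v, -, rfl⟩ := hC
    refine ⟨(arcGraph S).connectedComponentMk v, Finset.mem_univ _, ?_⟩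
    ext w
    simp [SimpleGraph.reachable_comm]
  · intros; rfl

lemma coeff_trunc {ι : Type} [Fintype ι] (n : ι → ℕ) (hn : ∀ i, 0 < n i) (d : ℕ →₀ ℕ) :
    MvPowerSeries.coeff d (∏ i, psum (n i)) =
      (((Fintype.piFinset (fun _ : ι => d.support)).filter
        (fun f => ∑ i, Finsupp.single (f i) (n i) = d)).card : ℚ) := by
  have h1 : MvPowerSeries.coeff d (∏ i, psum (n i)) = MvPowerSeries.coeff d
      (∏ i, ∑ k ∈ d.support, MvPowerSeries.monomial (Finsupp.single k (n i)) (1:ℚ)) := by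
    rw [MvPowerSeries.coeff_prod, MvPowerSeries.coeff_prod]
    refine Finset.sum_congr rfl fun l hl => Finset.prod_congr rfl fun i _ => ?_
    have hle : l i ≤ d := by
      rw [Finset.mem_finsuppAntidiag] at hl
      rw [← hl.1]
      exact Finset.single_le_sum (f := fun i => l i) (fun _ _ => zero_le) (Finset.mem_univ i)
    have e1 : MvPowerSeries.coeff (l i) (psum (n i)) =
      if ∃ k : ℕ, l i = Finsupp.single k (n i) then 1 else 0 := rfl
    rw [e1, map_sum]
    simp only [MvPowerSeries.coeff_monomial]
    split_ifs with h
    · obtain ⟨k, hk⟩ := h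
      rw [Finset.sum_eq_single k]
      · simp [hk]
      · intro b _ hb
        rw [if_neg]
        rw [hk]
        intro h
        exact hb ((Finsupp.single_left_injective (hn i).ne') h).symm
      · intro hk'
        exfalso
        have := hle k
        rw [hk, Finsupp.single_eq_same, Finsupp.notMem_support_iff.mp hk'] at this
        have := hn i
        omega
    · symm
      apply Finset.sum_eq_zero
      intro k _
      rw [if_neg]
      exact fun h' => h ⟨k, h'⟩
  rw [h1, Finset.prod_univ_sum, map_sum, Finset.card_filter, Nat.cast_sum]
  refine Finset.sum_congr rfl fun f _ => ?_
  have : ∀ s : Finset ι, ∏ i ∈ s, MvPowerSeries.monomial (Finsupp.single (f i) (n i)) (1:ℚ) =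
      MvPowerSeries.monomial (∑ i ∈ s, Finsupp.single (f i) (n i)) (1:ℚ) := by
    intro s
    induction s using Finset.induction_on with
    | empty => simp
    | insert a s ha ih =>
      rw [Finset.prod_insert ha, Finset.sum_insert ha, ih, MvPowerSeries.monomial_mul_monomial,
        one_mul]
  rw [this, MvPowerSeries.coeff_monomial]
  simp [eq_comm]

lemma const_reach {V : Type} (S : Finset (V × V)) (κ : V → ℕ)
    (h : ∀ a ∈ S, κ a.1 = κ a.2) {u v : V} (huv : (arcGraph S).Reachable u v) : κ u = κ v := by
  obtain ⟨p⟩ := huv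
  induction p with
  | nil => rfl
  | cons hadj _ ih =>
    rw [← ih]
    simp only [arcGraph, SimpleGraph.fromRel_adj] at hadj
    rcases hadj.2 with h' | h'
    · exact h _ h'
    · exact (h _ h').symm

lemma coeff_comps {V : Type} [Fintype V] [DecidableEq V] (S : Finset (V × V))
    (hS : ∀ e ∈ S, e.1 ≠ e.2) (d : ℕ →₀ ℕ) :
    MvPowerSeries.coeff d (∏ C ∈ comps S, psum C.card) =
      (((Kd V d).filter (fun κ => ∀ a ∈ S, κ a.1 = κ a.2)).card : ℚ) := by
  rw [prod_comps, coeff_trunc]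
  swap
  · intro c
    induction c using SimpleGraph.ConnectedComponent.ind with | _ v =>
    exact Finset.card_pos.mpr ⟨v, by simp⟩
  have key : ∀ f : (arcGraph S).ConnectedComponent → ℕ,
      ∑ c, Finsupp.single (f c) (Finset.univ.filter
        (fun v => (arcGraph S).connectedComponentMk v = c)).card =
      cntFn (fun v => f ((arcGraph S).connectedComponentMk v)) := by
    intro f
    rw [cntFn, ← Finset.sum_fiberwise (s := Finset.univ)
      (g := fun v => (arcGraph S).connectedComponentMk v)]
    refine Finset.sum_congr rfl fun c _ => ?_
    rw [Finset.sum_congr rfl (g := fun _ => Finsupp.single (f c) 1)]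
    · simp
    · intro v hv
      simp only [Finset.mem_filter] at hv
      rw [hv.2]
  congr 1
  refine Finset.card_bij (fun f _ v => f ((arcGraph S).connectedComponentMk v)) ?_ ?_ ?_
  · intro f hf
    simp only [Finset.mem_filter, key] at hf
    simp only [Finset.mem_filter, mem_Kd]
    refine ⟨hf.2, fun a ha => ?_⟩
    congr 1
    rw [SimpleGraph.ConnectedComponent.eq]
    apply SimpleGraph.Adj.reachable
    simp only [arcGraph, SimpleGraph.fromRel_adj]
    exact ⟨hS a ha, Or.inl ha⟩
  · intro f _ g _ h
    funext c
    induction c using SimpleGraph.ConnectedComponent.ind with | _ v =>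
    exact congrFun h v
  · intro κ hκ
    simp only [Finset.mem_filter] at hκ
    have hk := hκ.1
    rw [mem_Kd] at hk
    have hK := hκ.1
    simp only [Kd, Finset.mem_filter, Fintype.mem_piFinset] at hK
    refine ⟨SimpleGraph.ConnectedComponent.lift κ
      (fun v w p _ => const_reach S κ hκ.2 ⟨p⟩), ?_, ?_⟩
    · simp only [Finset.mem_filter, key, Fintype.mem_piFinset]
      refine ⟨fun c => ?_, ?_⟩
      · induction c using SimpleGraph.ConnectedComponent.ind with | _ v =>
        exact hK.1 v
      · exact hk
    · rfl

/-- For a digraph `D = (V, E)` with underlying undirected simple graph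
`G`, the commutative image of the chromatic noncommutative symmetric function of `D` is
the chromatic symmetric function of `G`: `χ(X_D) = X_G`. -/
theorem chi_XD_eq_XG {V : Type} [Fintype V] [DecidableEq V]
    (E : Finset (V × V)) (hE : ∀ e ∈ E, e.1 ≠ e.2) (r : LinearOrder V) :
    chi (XD E r) = XG (arcGraph E) := by
  ext d
  have hG : MvPowerSeries.coeff d (XG (arcGraph E)) =
      (((Kd V d).filter (fun κ => Proper (arcGraph E) κ)).card : ℚ) := by
    change ((Nat.card _ : ℕ) : ℚ) = _
    congr 1
    refine Nat.subtype_card _ fun κ => ?_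
    rw [Finset.mem_filter, mem_Kd, and_comm, Finsupp.ext_iff]
    simp only [cntFn_apply]
  have hP : ∀ κ : V → ℕ, Proper (arcGraph E) κ ↔ E.filter (fun a => κ a.1 = κ a.2) = ∅ := by
    intro κ
    rw [Finset.filter_eq_empty_iff]
    constructor
    · intro h a ha
      exact h _ _ (by simp only [arcGraph, SimpleGraph.fromRel_adj]; exact ⟨hE a ha, Or.inl ha⟩)
    · intro h u v huv
      simp only [arcGraph, SimpleGraph.fromRel_adj] at huv
      rcases huv.2 with h' | h'
      · exact h h'
      · exact fun e => h h' e.symm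
  rw [hG, XD, map_sum, map_sum]
  have h1 : ∀ S ∈ E.powerset, MvPowerSeries.coeff d
      (chi (((-1 : ℚ) ^ S.card) • PsiComp (alphaComp E S r))) =
      ∑ κ ∈ Kd V d, if S ⊆ E.filter (fun a => κ a.1 = κ a.2) then (-1 : ℚ) ^ S.card else 0 := by
    intro S hS
    have hSE := Finset.mem_powerset.mp hS
    rw [map_smul, chi_alpha, map_smul, coeff_comps S (fun e he => hE e (hSE he)),
      Finset.card_filter, Nat.cast_sum, smul_eq_mul, Finset.mul_sum]
    refine Finset.sum_congr rfl fun κ _ => ?_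
    have : (∀ a ∈ S, κ a.1 = κ a.2) ↔ S ⊆ E.filter (fun a => κ a.1 = κ a.2) := by
      constructor
      · intro h a ha
        exact Finset.mem_filter.mpr ⟨hSE ha, h a ha⟩
      · intro h a ha
        exact (Finset.mem_filter.mp (h ha)).2
    by_cases hc : S ⊆ E.filter (fun a => κ a.1 = κ a.2)
    · rw [if_pos hc, if_pos (this.mpr hc)]; simp
    · rw [if_neg hc, if_neg (fun h => hc (this.mp h))]; simp
  rw [Finset.sum_congr rfl h1, Finset.sum_comm, Finset.card_filter, Nat.cast_sum]
  refine Finset.sum_congr rfl fun κ _ => ?_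
  rw [← Finset.sum_filter]
  have h2 : E.powerset.filter (fun S => S ⊆ E.filter (fun a => κ a.1 = κ a.2)) =
      (E.filter (fun a => κ a.1 = κ a.2)).powerset := by
    ext S
    simp only [Finset.mem_filter, Finset.mem_powerset, and_iff_right_iff_imp]
    exact fun h => h.trans (Finset.filter_subset _ _)
  rw [h2]
  have h3 := congrArg (Int.cast : ℤ → ℚ)
    (Finset.sum_powerset_neg_one_pow_card (x := E.filter (fun a => κ a.1 = κ a.2)))
  push_cast at h3
  rw [h3]
  simp only [hP]
  split_ifs <;> simp

end
end

section
/- Let {D_i}_{i ≥ 1} be a family of digraphs such that |V(D_i)| = i for each i and such that the undirected graph underlying each D_i is connected. Then NSym = ℚ⟨X_{D_1}, X_{D_2}, …⟩, and the elements X_{D_1}, X_{D_2}, … are algebraically independent over ℚ. Concretely, the unique ℚ-algebra homomorphism from the free associative ℚ-algebra on countably many noncommuting generators y_1, y_2, … to NSym sending y_i ↦ X_{D_i} is bijective. -/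
/-!
Digraph conventions: a digraph `D` on a finite vertex type `V` is given by an arc set
`E : Finset (V × V)` all of whose arcs `(u, v)` satisfy `u ≠ v`.  For an arc set `S`,
`arcGraph S` is the simple graph with edge set `S' = {{u,v} : (u,v) ∈ S}`.
-/

open scoped Classical

noncomputable section

section helpers

open Module

lemma aux_sum_insert {ι : Type} [DecidableEq ι] (E : Finset ι) (e : ι) (he : e ∉ E) (P : Set ι → Prop)
    [∀ s, Decidable (P s)] :
    (∑ S ∈ (insert e E).powerset, ((-1 : ℚ) ^ S.card) * (if P ↑S then 1 else 0)) =
      (∑ S ∈ E.powerset, ((-1 : ℚ) ^ S.card) * (if P ↑S then 1 else 0)) -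
      ∑ S ∈ E.powerset, ((-1 : ℚ) ^ S.card) * (if P (insert e ↑S) then 1 else 0) := by
  rw [Finset.sum_powerset_insert he, sub_eq_add_neg, ← Finset.sum_neg_distrib]
  congr 1
  apply Finset.sum_congr rfl
  intro S hS
  have : e ∉ S := fun h => he (Finset.mem_powerset.1 hS h)
  rw [Finset.card_insert_of_notMem this, Finset.coe_insert]
  ring

lemma aux_sign {ι M : Type} [AddCommGroup M] [Module ℚ M] [FiniteDimensional ℚ M]
    (φ : ι → M) (T : Submodule ℚ M) (E : Finset ι) : ∀ (W : Submodule ℚ M), W ≤ T →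
    (∀ e ∈ E, φ e ∈ T) →
    (0 ≤ (-1 : ℚ) ^ (finrank ℚ W + finrank ℚ T) * ∑ S ∈ E.powerset, ((-1 : ℚ) ^ S.card) *
        (if W ⊔ Submodule.span ℚ (φ '' (S : Set ι)) = T then 1 else 0)) ∧
    ((∀ e ∈ E, φ e ∉ W) → W ⊔ Submodule.span ℚ (φ '' (E : Set ι)) = T →
     0 < (-1 : ℚ) ^ (finrank ℚ W + finrank ℚ T) * ∑ S ∈ E.powerset, ((-1 : ℚ) ^ S.card) *
        (if W ⊔ Submodule.span ℚ (φ '' (S : Set ι)) = T then 1 else 0)) := by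
  induction E using Finset.induction_on with
  | empty =>
    intro W hW _
    simp only [Finset.powerset_empty, Finset.sum_singleton, Finset.card_empty, pow_zero, one_mul,
      Finset.coe_empty, Set.image_empty, Submodule.span_empty, sup_bot_eq]
    by_cases h : W = T
    · subst h
      simp [← two_mul]
    · simp [h]
  | insert e E he ih =>
    intro W hW hT
    have hTE : ∀ e ∈ E, φ e ∈ T := fun x hx => hT x (Finset.mem_insert_of_mem hx)
    rw [aux_sum_insert E e he (fun s => W ⊔ Submodule.span ℚ (φ '' s) = T)]
    have key : ∀ s : Set ι, W ⊔ Submodule.span ℚ (φ '' (insert e s)) =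
        (W ⊔ Submodule.span ℚ {φ e}) ⊔ Submodule.span ℚ (φ '' s) := by
      intro s
      rw [Set.image_insert_eq, Submodule.span_insert, sup_assoc]
    simp only [key]
    by_cases heW : φ e ∈ W
    · have : W ⊔ Submodule.span ℚ {φ e} = W := by
        rw [sup_eq_left, Submodule.span_singleton_le_iff_mem]; exact heW
      rw [this, sub_self, mul_zero]
      exact ⟨le_rfl, fun h => absurd heW (h e (Finset.mem_insert_self _ _))⟩
    · have hW' : W ⊔ Submodule.span ℚ {φ e} ≤ T := by
        refine sup_le hW ?_
        rw [Submodule.span_singleton_le_iff_mem]; exact hT e (Finset.mem_insert_self _ _)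
      have hr : finrank ℚ (W ⊔ Submodule.span ℚ {φ e} : Submodule ℚ M) = finrank ℚ W + 1 :=
        Submodule.finrank_sup_span_singleton heW
      obtain ⟨a1, a2⟩ := ih W hW hTE
      obtain ⟨b1, b2⟩ := ih _ hW' hTE
      rw [hr, show finrank ℚ W + 1 + finrank ℚ T = finrank ℚ W + finrank ℚ T + 1 by ring,
        pow_succ] at b1 b2
      rw [mul_sub]
      refine ⟨by linarith, fun h1 h2 => ?_⟩
      rw [Finset.coe_insert, key] at h2
      have h1E : ∀ e ∈ E, φ e ∉ W := fun x hx => h1 x (Finset.mem_insert_of_mem hx)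
      by_cases hE : W ⊔ Submodule.span ℚ (φ '' (E : Set ι)) = T
      · have := a2 h1E hE
        linarith
      · have := b2 ?_ h2
        · linarith
        · intro x hx hmem
          apply hE
          -- exchange
          have hex : φ e ∈ W ⊔ Submodule.span ℚ {φ x} := by
            rw [Submodule.mem_sup] at hmem
            obtain ⟨w, hw, z, hz, hwz⟩ := hmem
            obtain ⟨c, rfl⟩ := Submodule.mem_span_singleton.1 hz
            have hc : c ≠ 0 := by
              rintro rfl
              apply h1E x hx
              rw [← hwz]; simpa using hw
            have : φ e = (-c⁻¹) • w + c⁻¹ • φ x := by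
              rw [← hwz, smul_add, smul_smul, inv_mul_cancel₀ hc]
              simp
            rw [this]
            exact Submodule.add_mem_sup (W.smul_mem _ hw)
              (Submodule.smul_mem _ _ (Submodule.mem_span_singleton_self _))
          have hle : W ⊔ Submodule.span ℚ {φ x} ≤ W ⊔ Submodule.span ℚ (φ '' (E : Set ι)) := by
            refine sup_le_sup_left (Submodule.span_mono ?_) _
            rw [Set.singleton_subset_iff]
            exact ⟨x, hx, rfl⟩
          rw [← h2]
          apply le_antisymm
          · exact sup_le (le_sup_left.trans le_sup_left) le_sup_right
          · refine sup_le (sup_le le_sup_left ?_) le_sup_right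
            rw [Submodule.span_singleton_le_iff_mem]
            exact hle hex

variable {V : Type} [Fintype V] [DecidableEq V]

def arcVec (a : V × V) : V → ℚ := Pi.single a.1 1 - Pi.single a.2 1

lemma arcVec_symm (u v : V) : arcVec (u, v) = - arcVec (v, u) := by
  simp [arcVec]

lemma reach_mem_span (S : Finset (V × V)) {u v : V} (h : (arcGraph S).Reachable u v) :
    arcVec (u, v) ∈ Submodule.span ℚ (arcVec '' (S : Set (V × V))) := by
  obtain ⟨p⟩ := h
  induction p with
  | nil => simp [arcVec]
  | @cons a b c hab p ih =>
    have : arcVec (a, c) = arcVec (a, b) + arcVec (b, c) := by simp [arcVec]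
    rw [this]
    refine Submodule.add_mem _ ?_ ih
    rw [arcGraph, SimpleGraph.fromRel_adj] at hab
    rcases hab.2 with h | h
    · exact Submodule.subset_span ⟨_, h, rfl⟩
    · rw [arcVec_symm]
      exact Submodule.neg_mem _ (Submodule.subset_span ⟨_, h, rfl⟩)

lemma mem_span_reach (S : Finset (V × V)) {u v : V}
    (h : arcVec (u, v) ∈ Submodule.span ℚ (arcVec '' (S : Set (V × V)))) :
    (arcGraph S).Reachable u v := by
  by_contra hn
  let L : (V → ℚ) →ₗ[ℚ] ℚ :=
    ∑ w ∈ Finset.univ.filter (fun w => (arcGraph S).Reachable u w), LinearMap.proj w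
  have hL : ∀ a b : V, L (arcVec (a, b)) = (if (arcGraph S).Reachable u a then 1 else 0) -
      (if (arcGraph S).Reachable u b then 1 else 0) := by
    intro a b
    simp [L, arcVec, Pi.single_apply, Finset.sum_sub_distrib]
  have hle : Submodule.span ℚ (arcVec '' (S : Set (V × V))) ≤ LinearMap.ker L := by
    rw [Submodule.span_le]
    rintro _ ⟨⟨a, b⟩, hab, rfl⟩
    rw [SetLike.mem_coe, LinearMap.mem_ker, hL]
    by_cases hne : a = b
    · simp [hne]
    have hadj : (arcGraph S).Adj a b := by
      rw [arcGraph, SimpleGraph.fromRel_adj]; exact ⟨hne, Or.inl hab⟩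
    have : (arcGraph S).Reachable u a ↔ (arcGraph S).Reachable u b :=
      ⟨fun h => h.trans hadj.reachable, fun h => h.trans hadj.reachable.symm⟩
    simp [this]
  have h0 := hle h
  rw [LinearMap.mem_ker, hL] at h0
  simp [hn] at h0

lemma conn_iff_span [Nonempty V] (S : Finset (V × V)) :
    (arcGraph S).Connected ↔ Submodule.span ℚ (arcVec '' (S : Set (V × V))) =
      Submodule.span ℚ (Set.range (arcVec (V := V))) := by
  constructor
  · intro h
    apply le_antisymm (Submodule.span_mono (Set.image_subset_range _ _))
    rw [Submodule.span_le]
    rintro _ ⟨⟨a, b⟩, rfl⟩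
    exact reach_mem_span S (h.preconnected a b)
  · intro h
    refine ⟨fun u v => mem_span_reach S ?_⟩
    rw [h]
    exact Submodule.subset_span ⟨_, rfl⟩

lemma conn_coeff_ne_zero [Nonempty V] (E : Finset (V × V)) (hE : ∀ e ∈ E, e.1 ≠ e.2)
    (hc : (arcGraph E).Connected) :
    (∑ S ∈ E.powerset, ((-1 : ℚ) ^ S.card) * (if (arcGraph S).Connected then 1 else 0)) ≠ 0 := by
  have := (aux_sign (arcVec (V := V)) (Submodule.span ℚ (Set.range (arcVec (V := V)))) E ⊥ bot_le
    (fun e _ => Submodule.subset_span ⟨e, rfl⟩)).2 ?_ ?_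
  · intro h0
    simp only [bot_sup_eq, ← conn_iff_span] at this
    rw [h0] at this
    simp at this
  · rintro ⟨a, b⟩ he h
    have h' := congrFun ((Submodule.mem_bot ℚ).1 h) a
    have hab : a ≠ b := hE _ he
    simp [arcVec, hab] at h'
  · rw [bot_sup_eq]; exact (conn_iff_span E).1 hc

lemma alphaComp_conn (E S : Finset (V × V)) (r : LinearOrder V) (h : (arcGraph S).Connected) :
    alphaComp E S r = [Fintype.card V] := by
  have := h.nonempty
  have hc : comps S = {Finset.univ} := by
    unfold comps
    have : (fun v => Finset.univ.filter (fun w => (arcGraph S).Reachable v w)) =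
        fun _ : V => (Finset.univ : Finset V) := by
      funext v
      ext w
      simp [h.preconnected v w]
    rw [this]
    exact Finset.image_const Finset.univ_nonempty _
  have hp : (sortedComps E S r).Perm [Finset.univ] := by
    unfold sortedComps
    refine (List.mergeSort_perm _ _).trans ?_
    rw [hc, Finset.toList_singleton]
  rw [List.perm_singleton] at hp
  simp [alphaComp, hp, Finset.card_univ]

lemma alphaComp_not_conn [Nonempty V] (E S : Finset (V × V)) (r : LinearOrder V)
    (h : ¬ (arcGraph S).Connected) :
    ∀ k ∈ alphaComp E S r, 0 < k ∧ k < Fintype.card V := by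
  intro k hk
  rw [alphaComp, List.mem_map] at hk
  obtain ⟨C, hC, rfl⟩ := hk
  rw [sortedComps, (List.mergeSort_perm _ _).mem_iff, Finset.mem_toList, comps,
    Finset.mem_image] at hC
  obtain ⟨v, -, rfl⟩ := hC
  constructor
  · exact Finset.card_pos.2 ⟨v, by simp⟩
  · refine lt_of_le_of_ne (Finset.card_le_univ _) fun heq => h ?_
    rw [Finset.card_eq_iff_eq_univ] at heq
    have hv : ∀ w, (arcGraph S).Reachable v w := by
      intro w
      have := Finset.mem_univ w
      rw [← heq] at this
      simpa using this
    exact ⟨fun a b => (hv a).symm.trans (hv b)⟩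

lemma XD_form [Nonempty V] (E : Finset (V × V)) (r : LinearOrder V) :
    ∃ R ∈ Algebra.adjoin ℚ (FreeAlgebra.ι ℚ '' {j : ℕ | j < Fintype.card V - 1}),
      XD E r = (∑ S ∈ E.powerset, ((-1 : ℚ) ^ S.card) *
        (if (arcGraph S).Connected then 1 else 0)) • FreeAlgebra.ι ℚ (Fintype.card V - 1) + R := by
  refine ⟨∑ S ∈ E.powerset, if (arcGraph S).Connected then 0 else
    ((-1 : ℚ) ^ S.card) • PsiComp (alphaComp E S r), ?_, ?_⟩
  · refine Subalgebra.sum_mem _ fun S _ => ?_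
    split_ifs with h
    · exact Subalgebra.zero_mem _
    · refine Subalgebra.smul_mem _ (Subalgebra.list_prod_mem _ ?_) _
      intro x hx
      obtain ⟨k, hk, rfl⟩ := List.mem_map.1 hx
      obtain ⟨h1, h2⟩ := alphaComp_not_conn E S r h k hk
      exact Algebra.subset_adjoin ⟨k - 1, by simp only [Set.mem_ofPred_eq]; omega, rfl⟩
  · rw [XD, Finset.sum_smul, ← Finset.sum_add_distrib]
    refine Finset.sum_congr rfl fun S _ => ?_
    split_ifs with h
    · rw [alphaComp_conn E S r h]
      simp [PsiComp, Psi]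
    · simp

lemma lift_eq_of_mem_adjoin {f g : ℕ → FreeAlgebra ℚ ℕ} {s : Set ℕ} (h : ∀ j ∈ s, f j = g j)
    {x : FreeAlgebra ℚ ℕ} (hx : x ∈ Algebra.adjoin ℚ (FreeAlgebra.ι ℚ '' s)) :
    FreeAlgebra.lift ℚ f x = FreeAlgebra.lift ℚ g x := by
  have : Algebra.adjoin ℚ (FreeAlgebra.ι ℚ '' s) ≤
      AlgHom.equalizer (FreeAlgebra.lift ℚ f) (FreeAlgebra.lift ℚ g) := by
    rw [Algebra.adjoin_le_iff]
    rintro _ ⟨j, hj, rfl⟩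
    simp [AlgHom.mem_equalizer, h j hj]
  exact this hx

def invGen (c : ℕ → ℚ) (R : ℕ → FreeAlgebra ℚ ℕ) (i : ℕ) : FreeAlgebra ℚ ℕ :=
  (c i)⁻¹ • (FreeAlgebra.ι ℚ i -
    FreeAlgebra.lift ℚ (fun j => if _h : j < i then invGen c R j else 0) (R i))
termination_by i

lemma triangular_bijective (X : ℕ → FreeAlgebra ℚ ℕ) (c : ℕ → ℚ) (R : ℕ → FreeAlgebra ℚ ℕ)
    (hc : ∀ i, c i ≠ 0)
    (hR : ∀ i, R i ∈ Algebra.adjoin ℚ (FreeAlgebra.ι ℚ '' {j : ℕ | j < i}))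
    (hX : ∀ i, X i = c i • FreeAlgebra.ι ℚ i + R i) :
    Function.Bijective (FreeAlgebra.lift ℚ X) := by
  constructor
  · have key : (FreeAlgebra.lift ℚ (invGen c R)).comp (FreeAlgebra.lift ℚ X) =
        AlgHom.id ℚ _ := by
      apply FreeAlgebra.hom_ext
      funext i
      simp only [Function.comp_apply, AlgHom.coe_comp, FreeAlgebra.lift_ι_apply, AlgHom.coe_id, id]
      rw [hX, map_add, map_smul, FreeAlgebra.lift_ι_apply]
      have h1 : FreeAlgebra.lift ℚ (invGen c R) (R i) =
          FreeAlgebra.lift ℚ (fun j => if _h : j < i then invGen c R j else 0) (R i) := by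
        apply lift_eq_of_mem_adjoin _ (hR i)
        intro j hj
        have hj : j < i := hj
        simp [hj]
      rw [h1, invGen, smul_smul, mul_inv_cancel₀ (hc i), one_smul, sub_add_cancel]
    intro x y hxy
    have := congrArg (FreeAlgebra.lift ℚ (invGen c R)) hxy
    rw [← AlgHom.comp_apply, ← AlgHom.comp_apply, key] at this
    exact this
  · have hι : ∀ i, FreeAlgebra.ι ℚ i ∈ (FreeAlgebra.lift ℚ X).range := by
      intro i
      induction i using Nat.strong_induction_on with
      | _ i ih =>
        have hRi : R i ∈ (FreeAlgebra.lift ℚ X).range := by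
          refine (Algebra.adjoin_le_iff.2 ?_) (hR i)
          rintro _ ⟨j, hj, rfl⟩
          exact ih j hj
        have hXi : X i ∈ (FreeAlgebra.lift ℚ X).range :=
          ⟨FreeAlgebra.ι ℚ i, FreeAlgebra.lift_ι_apply _ _⟩
        have : FreeAlgebra.ι ℚ i = (c i)⁻¹ • (X i - R i) := by
          rw [hX, add_sub_cancel_right, smul_smul, inv_mul_cancel₀ (hc i), one_smul]
        rw [this]
        exact Subalgebra.smul_mem _ (Subalgebra.sub_mem _ hXi hRi) _
    rw [← AlgHom.range_eq_top, eq_top_iff, ← FreeAlgebra.adjoin_range_ι, Algebra.adjoin_le_iff]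
    rintro _ ⟨i, rfl⟩
    exact hι i

end helpers

/-- Let `{D_i}_{i ≥ 1}` be a family of digraphs such that `D_i` has
exactly `i` vertices and the undirected graph underlying `D_i` is connected (here the
digraph `D_{i+1}`, for `i : ℕ`, has vertex set `Fin (i+1)` and arc set `E i`).  Then
`NSym = ℚ⟨X_{D_1}, X_{D_2}, …⟩` and the `X_{D_i}` are algebraically independent over
`ℚ`: the unique `ℚ`-algebra homomorphism from the free associative `ℚ`-algebra on
countably many noncommuting generators to `NSym` sending the `i`-th generator to
`X_{D_{i+1}}` is bijective. -/
theorem NSym_free_on_chromatic_generators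
    (E : ∀ i : ℕ, Finset (Fin (i + 1) × Fin (i + 1)))
    (hE : ∀ i, ∀ e ∈ E i, e.1 ≠ e.2)
    (hconn : ∀ i, (arcGraph (E i)).Connected) :
    Function.Bijective
      (FreeAlgebra.lift ℚ (fun i : ℕ => XD (E i) inferInstance) :
        FreeAlgebra ℚ ℕ →ₐ[ℚ] NSym) := by
  choose R hR hX using fun i => XD_form (E i) (inferInstance : LinearOrder (Fin (i + 1)))
  refine triangular_bijective _ _ R (fun i => conn_coeff_ne_zero (E i) (hE i) (hconn i)) ?_ ?_
  · intro i
    simpa using hR i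
  · intro i
    have := hX i
    simpa using this

end
end

section
/- Let D be a digraph with n ≥ 1 vertices whose underlying undirected graph is connected. Write X_D = Σ_{α ⊨ n} c_α Ψ_α, where the sum is over compositions α of n and the Ψ_α form a ℚ-basis of the degree-n homogeneous component of NSym. Then the coefficient c_{(n)} of Ψ_{(n)} in X_D is nonzero. -/
/-!
Digraph conventions: a digraph `D` on a finite vertex type `V` is given by an arc set
`E : Finset (V × V)` all of whose arcs `(u, v)` satisfy `u ≠ v`.  For an arc set `S`,
`arcGraph S` is the simple graph with edge set `S' = {{u,v} : (u,v) ∈ S}`.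
-/

open scoped Classical

noncomputable section

/-- Connectivity of the arc set `S` on `V` after identifying vertices with equal label. -/
def PConn {V : Type} (p : V → V) (S : Finset (V × V)) : Prop :=
  ∀ g : V → Prop, (∀ x y, p x = p y → (g x ↔ g y)) → (∀ e ∈ S, (g e.1 ↔ g e.2)) →
    ∀ x y, g x ↔ g y

/-- Contract the arc `e` in the labelling `p`. -/
def contr {V : Type} [DecidableEq V] (p : V → V) (e : V × V) : V → V :=
  fun x => if p x = p e.2 then p e.1 else p x

/-- Signed count of connected sub arc sets. -/
def fsum {V : Type} [DecidableEq V] (p : V → V) (E : Finset (V × V)) : ℚ :=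
  ∑ S ∈ E.powerset, (-1 : ℚ) ^ S.card * (if PConn p S then 1 else 0)

theorem pconn_contr {V : Type} [DecidableEq V] (p : V → V) (e : V × V)
    (S : Finset (V × V)) : PConn (contr p e) S ↔ PConn p (insert e S) := by
  constructor
  · intro h g hp hS
    refine h g ?_ (fun a ha => hS a (Finset.mem_insert_of_mem ha))
    have he := hS e (Finset.mem_insert_self _ _)
    intro x y hxy
    unfold contr at hxy
    split_ifs at hxy with h1 h2 h2
    · exact hp _ _ (h1.trans h2.symm)
    · rw [hp _ _ h1, ← he, hp _ _ hxy]
    · rw [hp _ _ h2, ← he, hp _ _ hxy]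
    · exact hp _ _ hxy
  · intro h g hp hS
    refine h g (fun x y hxy => hp _ _ (by simp [contr, hxy])) ?_
    intro a ha
    rcases Finset.mem_insert.1 ha with rfl | ha
    · apply hp
      simp [contr]
    · exact hS a ha

theorem fsum_insert {V : Type} [DecidableEq V] (p : V → V) (e : V × V)
    (E : Finset (V × V)) (he : e ∉ E) :
    fsum p (insert e E) = fsum p E - fsum (contr p e) E := by
  unfold fsum
  rw [Finset.sum_powerset_insert he, sub_eq_add_neg, ← Finset.sum_neg_distrib]
  congr 1
  refine Finset.sum_congr rfl fun S hS => ?_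
  have : e ∉ S := fun h => he (Finset.mem_powerset.1 hS h)
  rw [Finset.card_insert_of_notMem this, pow_succ]
  simp only [pconn_contr]
  ring

theorem card_contr {V : Type} [Fintype V] [DecidableEq V] (p : V → V) (e : V × V)
    (h : p e.1 ≠ p e.2) :
    (Finset.univ.image p).card = (Finset.univ.image (contr p e)).card + 1 := by
  have : Finset.univ.image (contr p e) = (Finset.univ.image p).erase (p e.2) := by
    ext y
    simp only [Finset.mem_image, Finset.mem_univ, true_and, Finset.mem_erase, contr]
    constructor
    · rintro ⟨x, rfl⟩
      split_ifs with h1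
      · exact ⟨h, _, rfl⟩
      · exact ⟨h1, _, rfl⟩
    · rintro ⟨h1, x, rfl⟩
      exact ⟨x, by simp [h1]⟩
  rw [this, Finset.card_erase_add_one]
  simp

theorem contr_loop {V : Type} [DecidableEq V] (p : V → V) (e : V × V)
    (h : p e.1 = p e.2) : contr p e = p := by
  funext x
  unfold contr
  split_ifs with h1
  · rw [h, h1]
  · rfl

theorem fsum_main {V : Type} [Fintype V] [DecidableEq V] [Nonempty V]
    (E : Finset (V × V)) : ∀ p : V → V,
    0 ≤ (-1 : ℚ) ^ ((Finset.univ.image p).card + 1) * fsum p E ∧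
    ((∀ e ∈ E, p e.1 ≠ p e.2) → PConn p E →
      0 < (-1 : ℚ) ^ ((Finset.univ.image p).card + 1) * fsum p E) := by
  induction E using Finset.induction_on with
  | empty =>
    intro p
    have key : PConn p ∅ → (Finset.univ.image p).card = 1 := by
      intro h
      obtain ⟨x0⟩ := ‹Nonempty V›
      rw [Finset.card_eq_one]
      refine ⟨p x0, ?_⟩
      ext y
      simp only [Finset.mem_image, Finset.mem_univ, true_and, Finset.mem_singleton]
      constructor
      · rintro ⟨x, rfl⟩
        exact (h (fun x => p x = p x0) (fun x y hxy => by simp [hxy]) (by simp) x x0).2 rfl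
      · rintro rfl
        exact ⟨x0, rfl⟩
    have hs : fsum p ∅ = if PConn p ∅ then 1 else 0 := by
      simp [fsum]
    rw [hs]
    by_cases h : PConn p ∅
    · rw [key h, if_pos h]; norm_num
    · simp [h]
  | insert e E he ih =>
    intro p
    rw [fsum_insert p e E he]
    by_cases hl : p e.1 = p e.2
    · rw [contr_loop p e hl]
      refine ⟨by simp, fun h _ => absurd hl (h e (Finset.mem_insert_self _ _))⟩
    · have hc := card_contr p e hl
      obtain ⟨a1, a2⟩ := ih p
      obtain ⟨b1, b2⟩ := ih (contr p e)
      have hsplit : (-1 : ℚ) ^ ((Finset.univ.image p).card + 1) * (fsum p E - fsum (contr p e) E)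
          = (-1 : ℚ) ^ ((Finset.univ.image p).card + 1) * fsum p E +
          (-1 : ℚ) ^ ((Finset.univ.image (contr p e)).card + 1) * fsum (contr p e) E := by
        rw [hc]; ring
      rw [hsplit]
      refine ⟨add_nonneg a1 b1, fun hloop hconn => ?_⟩
      by_cases hE : PConn p E
      · exact add_pos_of_pos_of_nonneg
          (a2 (fun a ha => hloop a (Finset.mem_insert_of_mem ha)) hE) b1
      · refine add_pos_of_nonneg_of_pos a1 (b2 ?_ ((pconn_contr p e E).2 hconn))
        intro a ha hcontr
        apply hE
        intro g hp hS
        refine hconn g hp ?_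
        intro b hb
        rcases Finset.mem_insert.1 hb with rfl | hb
        · have hne := hloop a (Finset.mem_insert_of_mem ha)
          have hga := hS a ha
          unfold contr at hcontr
          split_ifs at hcontr with h1 h2 h2
          · exact absurd (h1.trans h2.symm) hne
          · rw [hp _ _ hcontr, ← hga, hp _ _ h1]
          · rw [← hp _ _ hcontr, hga, hp _ _ h2]
          · exact absurd hcontr hne
        · exact hS b hb

theorem pconn_id {V : Type} [Nonempty V] (S : Finset (V × V)) :
    PConn id S ↔ (arcGraph S).Connected := by
  constructor
  · intro h
    have hp : (arcGraph S).Preconnected := by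
      intro x y
      refine (h (fun z => (arcGraph S).Reachable x z) ?_ ?_ x y).1
        (SimpleGraph.Reachable.refl x)
      · rintro a b hab
        rw [show a = b from hab]
      · rintro ⟨a, b⟩ hab
        by_cases hne : a = b
        · simp [hne]
        · have hadj : (arcGraph S).Adj a b := by
            simp [arcGraph, hne, hab]
          exact ⟨fun h => h.trans hadj.reachable, fun h => h.trans hadj.symm.reachable⟩
    exact ⟨hp⟩
  · intro h g _ hS x y
    obtain ⟨w⟩ := h.preconnected x y
    induction w with
    | nil => rfl
    | cons hadj _ ih =>
      rw [← ih]
      simp only [arcGraph, SimpleGraph.fromRel_adj] at hadj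
      rcases hadj.2 with h1 | h1
      · exact hS _ h1
      · exact (hS _ h1).symm

theorem alpha_iff {V : Type} [Fintype V] [DecidableEq V] [Nonempty V]
    (E S : Finset (V × V)) (r : LinearOrder V) :
    (alphaComp E S r).map (fun k => k - 1) = [Fintype.card V - 1] ↔ PConn id S := by
  rw [pconn_id]
  constructor
  · intro h
    have hlen : (comps S).card = 1 := by
      have := congrArg List.length h
      simpa [alphaComp, sortedComps] using this
    obtain ⟨C, hC⟩ := Finset.card_eq_one.1 hlen
    have hmem : ∀ v, Finset.univ.filter (fun w => (arcGraph S).Reachable v w) = C := by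
      intro v
      rw [← Finset.mem_singleton, ← hC]
      exact Finset.mem_image_of_mem _ (Finset.mem_univ v)
    have hp : (arcGraph S).Preconnected := by
      intro x y
      have : y ∈ Finset.univ.filter (fun w => (arcGraph S).Reachable x w) := by
        rw [hmem x, ← hmem y]
        simp
      simpa using this
    exact ⟨hp⟩
  · intro h
    have hC : comps S = {Finset.univ} := by
      have : ∀ v, Finset.univ.filter (fun w => (arcGraph S).Reachable v w) = Finset.univ := by
        intro v
        ext w
        simp [h.preconnected v w]
      unfold comps
      simp only [this]
      exact Finset.image_const Finset.univ_nonempty _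
    simp [alphaComp, sortedComps, hC]

theorem coeff_PsiComp (l : List ℕ) (m : FreeMonoid ℕ) :
    (FreeAlgebra.equivMonoidAlgebraFreeMonoid (PsiComp l)).coeff m =
      if FreeMonoid.ofList (l.map (fun k => k - 1)) = m then 1 else 0 := by
  have : FreeAlgebra.equivMonoidAlgebraFreeMonoid (PsiComp l) =
      MonoidAlgebra.single (FreeMonoid.ofList (l.map (fun k => k - 1))) (1 : ℚ) := by
    induction l with
    | nil => simp [PsiComp, MonoidAlgebra.one_def]
    | cons a l ih =>
      have h1 : PsiComp (a :: l) = Psi a * PsiComp l := by simp [PsiComp]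
      rw [h1, map_mul, ih]
      simp [Psi, FreeAlgebra.equivMonoidAlgebraFreeMonoid, MonoidAlgebra.single_mul_single]
  rw [this]
  simp [Finsupp.single_apply]

/-- Let `D = (V, E)` be a digraph with `n ≥ 1` vertices whose
underlying undirected graph is connected.  Writing `X_D = Σ_{α ⊨ n} c_α Ψ_α` over the
`ℚ`-basis `{Ψ_α}` of monomials in the generators of `NSym` — identified via the algebra
isomorphism of `NSym = FreeAlgebra ℚ ℕ` with the monoid algebra of the free monoid,
under which `Ψ_{(n)} = Ψ_n` corresponds to the single-letter word `FreeMonoid.of (n-1)` —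
the coefficient `c_{(n)}` of `Ψ_{(n)}` in `X_D` is nonzero. -/
theorem coeff_Psi_single_ne_zero {V : Type} [Fintype V] [DecidableEq V]
    (E : Finset (V × V)) (hE : ∀ e ∈ E, e.1 ≠ e.2) (r : LinearOrder V)
    (hconn : (arcGraph E).Connected)
    (n : ℕ) (hn : 1 ≤ n) (hcard : Fintype.card V = n) :
    (FreeAlgebra.equivMonoidAlgebraFreeMonoid (XD E r)).coeff (FreeMonoid.of (n - 1)) ≠ 0 := by
  haveI : Nonempty V := hconn.nonempty
  have hsum : (FreeAlgebra.equivMonoidAlgebraFreeMonoid (XD E r)).coeff (FreeMonoid.of (n - 1))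
      = fsum id E := by
    unfold XD fsum
    rw [map_sum, MonoidAlgebra.coeff_sum, Finsupp.finset_sum_apply]
    refine Finset.sum_congr rfl fun S _ => ?_
    rw [map_smul, MonoidAlgebra.coeff_smul, Finsupp.smul_apply, coeff_PsiComp, smul_eq_mul]
    congr 1
    have := alpha_iff E S r
    rw [hcard] at this
    exact if_congr this rfl rfl
  rw [hsum]
  intro h0
  have := (fsum_main E id).2 hE ((pconn_id E).2 hconn)
  rw [h0] at this
  simp at this

end
end

section
/- For every n ≥ 0, the chromatic noncommutative symmetric function of the inwardly directed star graph on n + 1 vertices satisfies X_{S_{n+1}} = Σ_{i=0}^{n} (−1)^i · binom(n, i) · Ψ_{(1^{n−i}, i+1)}, where (1^{n−i}, i+1) denotes the composition consisting of n − i parts equal to 1 followed by a final part equal to i + 1. -/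
/-!
Digraph conventions: a digraph `D` on a finite vertex type `V` is given by an arc set
`E : Finset (V × V)` all of whose arcs `(u, v)` satisfy `u ≠ v`.  For an arc set `S`,
`arcGraph S` is the simple graph with edge set `S' = {{u,v} : (u,v) ∈ S}`.
-/

open scoped Classical

noncomputable section

/-- The inwardly directed star graph `S_{n+1}`: the digraph on the `n + 1` vertices
`Fin (n+1)` whose arcs are `(v, 0)` for each vertex `v ≠ 0`. -/
def inStarArcs (n : ℕ) : Finset (Fin (n + 1) × Fin (n + 1)) :=
  Finset.univ.filter (fun a => a.1 ≠ 0 ∧ a.2 = 0)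

theorem star_adj {n : ℕ} {S : Finset (Fin (n + 1) × Fin (n + 1))} (hS : S ⊆ inStarArcs n)
    {v w : Fin (n + 1)} (h : (arcGraph S).Adj v w) :
    v ∈ insert 0 (S.image Prod.fst) ∧ w ∈ insert 0 (S.image Prod.fst) := by
  unfold arcGraph at h
  rw [SimpleGraph.fromRel_adj] at h
  have key : ∀ a b, (a, b) ∈ S →
      a ∈ insert 0 (S.image Prod.fst) ∧ b ∈ insert 0 (S.image Prod.fst) := by
    intro a b hab
    have h2 := hS hab
    simp only [inStarArcs, Finset.mem_filter] at h2
    refine ⟨Finset.mem_insert_of_mem (Finset.mem_image.2 ⟨_, hab, rfl⟩), ?_⟩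
    rw [h2.2.2]
    exact Finset.mem_insert_self _ _
  rcases h.2 with h | h
  · exact key _ _ h
  · exact (key _ _ h).symm

theorem star_reach_zero {n : ℕ} {S : Finset (Fin (n + 1) × Fin (n + 1))}
    (hS : S ⊆ inStarArcs n) {v : Fin (n + 1)} (h : v ∈ insert 0 (S.image Prod.fst)) :
    (arcGraph S).Reachable 0 v := by
  rcases Finset.mem_insert.1 h with h | h
  · rw [h]
  · obtain ⟨⟨a, b⟩, hab, rfl⟩ := Finset.mem_image.1 h
    have h2 := hS hab
    simp only [inStarArcs, Finset.mem_filter] at h2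
    apply SimpleGraph.Adj.reachable
    unfold arcGraph
    rw [SimpleGraph.fromRel_adj]
    refine ⟨fun h => h2.2.1 h.symm, Or.inr ?_⟩
    rw [← h2.2.2]
    exact hab

theorem star_reach {n : ℕ} {S : Finset (Fin (n + 1) × Fin (n + 1))}
    (hS : S ⊆ inStarArcs n) (v w : Fin (n + 1)) :
    (arcGraph S).Reachable v w ↔
      v = w ∨ (v ∈ insert 0 (S.image Prod.fst) ∧ w ∈ insert 0 (S.image Prod.fst)) := by
  constructor
  · rintro ⟨p⟩
    induction p with
    | nil => exact Or.inl rfl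
    | cons h p ih =>
      have h1 := star_adj hS h
      rcases ih with ih | ih
      · subst ih
        exact Or.inr h1
      · exact Or.inr ⟨h1.1, ih.2⟩
  · rintro (h | ⟨h1, h2⟩)
    · rw [h]
    · exact (star_reach_zero hS h1).symm.trans (star_reach_zero hS h2)

theorem star_comps {n : ℕ} {S : Finset (Fin (n + 1) × Fin (n + 1))}
    (hS : S ⊆ inStarArcs n) :
    comps S = insert (insert 0 (S.image Prod.fst))
      ((insert 0 (S.image Prod.fst))ᶜ.image (fun v => ({v} : Finset (Fin (n + 1))))) := by
  have hv : ∀ v, Finset.univ.filter (fun w => (arcGraph S).Reachable v w) =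
      if v ∈ insert 0 (S.image Prod.fst) then insert 0 (S.image Prod.fst) else {v} := by
    intro v
    ext w
    rw [Finset.mem_filter, star_reach hS]
    split_ifs with h
    · constructor
      · rintro ⟨-, rfl | h'⟩
        · exact h
        · exact h'.2
      · intro h'
        exact ⟨Finset.mem_univ _, Or.inr ⟨h, h'⟩⟩
    · rw [Finset.mem_singleton]
      constructor
      · rintro ⟨-, h' | h'⟩
        · exact h'.symm
        · exact absurd h'.1 h
      · rintro rfl
        exact ⟨Finset.mem_univ _, Or.inl rfl⟩
  unfold comps
  simp only [hv]
  ext C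
  rw [Finset.mem_image, Finset.mem_insert, Finset.mem_image]
  constructor
  · rintro ⟨v, -, h⟩
    split_ifs at h with h'
    · exact Or.inl h.symm
    · exact Or.inr ⟨v, Finset.mem_compl.2 h', h⟩
  · rintro (h | ⟨v, h', h⟩)
    · exact ⟨0, Finset.mem_univ _, by rw [if_pos (Finset.mem_insert_self _ _), h]⟩
    · exact ⟨v, Finset.mem_univ _, by rw [if_neg (Finset.mem_compl.1 h'), h]⟩

theorem star_od {n : ℕ} (v : Fin (n + 1)) : od (inStarArcs n) v = if v = 0 then 0 else 1 := by
  unfold od inStarArcs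
  split_ifs with h
  · subst h
    norm_cast
    rw [Finset.card_eq_zero, Finset.filter_eq_empty_iff]
    intro a ha h
    exact (Finset.mem_filter.1 ha).2.1 h
  · norm_cast
    rw [Finset.card_eq_one]
    refine ⟨(v, 0), ?_⟩
    ext ⟨a, b⟩
    simp only [Finset.mem_filter, Finset.mem_univ, true_and, Finset.mem_singleton, Prod.mk.injEq]
    constructor
    · rintro ⟨⟨_, h1⟩, h2⟩
      exact ⟨h2, h1⟩
    · rintro ⟨rfl, h1⟩
      exact ⟨⟨h, h1⟩, rfl⟩

theorem star_card (n : ℕ) : (inStarArcs n).card = n := by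
  have : inStarArcs n = (Finset.univ.erase (0 : Fin (n + 1))).image (fun v => (v, 0)) := by
    ext ⟨a, b⟩
    simp only [inStarArcs, Finset.mem_filter, Finset.mem_univ, true_and, Finset.mem_image,
      Finset.mem_erase, and_true, Prod.mk.injEq]
    constructor
    · rintro ⟨h1, h2⟩
      exact ⟨a, h1, rfl, h2.symm⟩
    · rintro ⟨c, h1, rfl, h2⟩
      exact ⟨h1, h2.symm⟩
  rw [this, Finset.card_image_of_injective _ (fun a b h => (Prod.mk.inj h).1)]
  simp

theorem star_indeg {n : ℕ} (v : Fin (n + 1)) :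
    indeg (inStarArcs n) v = if v = 0 then (n : ℤ) else 0 := by
  unfold indeg
  split_ifs with h
  · subst h
    rw [Finset.filter_true_of_mem, star_card]
    intro a ha
    exact (Finset.mem_filter.1 ha).2.2
  · norm_cast
    rw [Finset.card_eq_zero, Finset.filter_eq_empty_iff]
    intro a ha h'
    exact h (h' ▸ (Finset.mem_filter.1 ha).2.2)

theorem star_td_single {n : ℕ} {v : Fin (n + 1)} (h : v ≠ 0) :
    td (inStarArcs n) {v} = 1 := by
  unfold td
  rw [Finset.sum_singleton, Finset.sum_singleton, star_od, star_indeg, if_neg h, if_neg h]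
  norm_num

theorem star_td_big {n : ℕ} {W : Finset (Fin (n + 1))} (h : 0 ∈ W) :
    td (inStarArcs n) W ≤ 0 := by
  unfold td
  have h1 : ∑ w ∈ W, indeg (inStarArcs n) w = n := by
    simp [star_indeg, h]
  have h2 : ∑ w ∈ W, od (inStarArcs n) w ≤ ∑ w, od (inStarArcs n) w :=
    Finset.sum_le_sum_of_subset_of_nonneg (Finset.subset_univ _)
      (fun i _ _ => by rw [star_od]; split_ifs <;> norm_num)
  have h3 : ∑ w, od (inStarArcs n) w = n := by
    rw [Fin.sum_univ_succ]
    simp [star_od]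
  omega

def triKey {n : ℕ} (E : Finset (Fin n × Fin n)) (C : Finset (Fin n)) :
    ℤ ×ₗ (ℕ ×ₗ List (Fin n)) :=
  toLex (td E C, toLex (C.card, word inferInstance C))

theorem word_inj_s8 {n : ℕ} {C C' : Finset (Fin n)}
    (h : word inferInstance C = word inferInstance C') : C = C' := by
  unfold word at h
  have := congrArg List.toFinset h
  simpa using this

theorem tri_or_eq_iff {n : ℕ} (E : Finset (Fin n × Fin n)) (C C' : Finset (Fin n)) :
    (tri E inferInstance C C' ∨ C = C') ↔ triKey E C' ≤ triKey E C := by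
  have hinj : C = C' ↔ triKey E C' = triKey E C := by
    constructor
    · rintro rfl
      rfl
    · intro h
      unfold triKey at h
      have h1 := (Prod.mk.inj (toLex.injective h)).2
      exact (word_inj_s8 (Prod.mk.inj (toLex.injective h1)).2).symm
  have hlt : tri E inferInstance C C' ↔ triKey E C' < triKey E C := by
    unfold tri triKey
    rw [Prod.Lex.toLex_lt_toLex, Prod.Lex.toLex_lt_toLex]
    simp only [gt_iff_lt]
    rw [← and_or_left]
    apply or_congr Iff.rfl
    rw [eq_comm, @eq_comm _ C.card]
    exact Iff.rfl
  rw [hinj, hlt, le_iff_lt_or_eq]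

theorem star_alpha {n : ℕ} {S : Finset (Fin (n + 1) × Fin (n + 1))}
    (hS : S ⊆ inStarArcs n) :
    alphaComp (inStarArcs n) S inferInstance =
      List.replicate (n - S.card) 1 ++ [S.card + 1] := by
  obtain ⟨B, hB⟩ : ∃ B, B = insert 0 (S.image Prod.fst) := ⟨_, rfl⟩
  have h0B : 0 ∈ B := by rw [hB]; exact Finset.mem_insert_self _ _
  have hBcard : B.card = S.card + 1 := by
    rw [hB, Finset.card_insert_of_notMem, Finset.card_image_of_injOn]
    · rintro ⟨a, b⟩ ha ⟨c, d⟩ hc h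
      have h1 := (Finset.mem_filter.1 (hS ha)).2.2
      have h2 := (Finset.mem_filter.1 (hS hc)).2.2
      simp only at h h1 h2
      rw [h, h1, h2]
    · intro h
      obtain ⟨a, ha, h⟩ := Finset.mem_image.1 h
      exact (Finset.mem_filter.1 (hS ha)).2.1 h
  have hc := star_comps hS
  rw [← hB] at hc
  have hnot : B ∉ Bᶜ.image (fun v => ({v} : Finset (Fin (n + 1)))) := by
    intro h
    obtain ⟨v, hv, h⟩ := Finset.mem_image.1 h
    exact Finset.mem_compl.1 hv (h ▸ Finset.mem_singleton_self v)
  have hcc : (comps S).card = n - S.card + 1 := by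
    rw [hc, Finset.card_insert_of_notMem hnot,
      Finset.card_image_of_injective _ Finset.singleton_injective, Finset.card_compl, hBcard,
      Fintype.card_fin]
    omega
  have hperm : (sortedComps (inStarArcs n) S inferInstance).Perm (comps S).toList :=
    List.mergeSort_perm _ _
  have hpw : (sortedComps (inStarArcs n) S inferInstance).Pairwise
      (fun C C' => triKey (inStarArcs n) C' ≤ triKey (inStarArcs n) C) := by
    have := List.pairwise_mergeSort
      (le := fun C C' => decide (tri (inStarArcs n) inferInstance C C' ∨ C = C'))
      (by
        intro a b c
        simp only [decide_eq_true_eq, tri_or_eq_iff]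
        exact fun h1 h2 => h2.trans h1)
      (by
        intro a b
        simp only [Bool.or_eq_true, decide_eq_true_eq, tri_or_eq_iff]
        exact le_total _ _) (comps S).toList
    refine List.Pairwise.imp ?_ this
    intro a b
    simp only [decide_eq_true_eq, tri_or_eq_iff]
    exact id
  unfold alphaComp
  generalize sortedComps (inStarArcs n) S inferInstance = L at hperm hpw
  have hmem : ∀ C, C ∈ L ↔ C = B ∨ ∃ v, v ∉ B ∧ {v} = C := by
    intro C
    rw [hperm.mem_iff, Finset.mem_toList, hc, Finset.mem_insert, Finset.mem_image]
    simp only [Finset.mem_compl]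
  have hnd : L.Nodup := hperm.nodup_iff.2 (Finset.nodup_toList _)
  have hlen : L.length = n - S.card + 1 := by
    rw [hperm.length_eq, Finset.length_toList, hcc]
  obtain ⟨s, t, rfl⟩ := List.append_of_mem ((hmem B).2 (Or.inl rfl))
  have ht : t = [] := by
    rw [List.eq_nil_iff_forall_not_mem]
    intro C hC
    have h1 : triKey (inStarArcs n) C ≤ triKey (inStarArcs n) B :=
      (List.pairwise_cons.1 (List.pairwise_append.1 hpw).2.1).1 C hC
    have h2 : C ≠ B := by
      rintro rfl
      exact (List.nodup_cons.1 (List.nodup_append.1 hnd).2.1).1 hC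
    obtain ⟨v, hv, rfl⟩ := ((hmem C).1 (by simp [hC])).resolve_left h2
    have hv0 : v ≠ 0 := fun h => hv (h ▸ h0B)
    have h3 := star_td_single hv0
    have h4 := star_td_big h0B
    unfold triKey at h1
    rw [Prod.Lex.toLex_le_toLex] at h1
    simp only at h1
    omega
  subst ht
  rw [List.map_append, List.map_singleton, hBcard]
  congr 1
  rw [List.eq_replicate_iff]
  constructor
  · simpa using hlen
  · intro b hb
    obtain ⟨C, hC, rfl⟩ := List.mem_map.1 hb
    have h2 : C ≠ B := by
      intro h
      exact (List.nodup_append.1 hnd).2.2 C hC B (by simp) h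
    obtain ⟨v, hv, rfl⟩ := ((hmem C).1 (by simp [hC])).resolve_left h2
    simp

/-- For every `n ≥ 0`, the chromatic noncommutative symmetric function
of the inwardly directed star graph on `n + 1` vertices satisfies
`X_{S_{n+1}} = Σ_{i=0}^{n} (−1)^i (n choose i) Ψ_{(1^{n−i}, i+1)}`, where
`(1^{n−i}, i+1)` is the composition consisting of `n − i` parts equal to `1` followed by
a final part equal to `i + 1`. -/
theorem XD_inward_star (n : ℕ) :
    XD (inStarArcs n) inferInstance =
      ∑ i ∈ Finset.range (n + 1),
        ((-1 : ℚ) ^ i * (n.choose i : ℚ)) •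
          PsiComp (List.replicate (n - i) 1 ++ [i + 1]) := by
  unfold XD
  have h : ∀ S ∈ (inStarArcs n).powerset,
      ((-1 : ℚ) ^ S.card) • PsiComp (alphaComp (inStarArcs n) S inferInstance) =
      (fun i => ((-1 : ℚ) ^ i) • PsiComp (List.replicate (n - i) 1 ++ [i + 1])) S.card := by
    intro S hS
    rw [star_alpha (Finset.mem_powerset.1 hS)]
  refine (Finset.sum_congr rfl h).trans ((Finset.sum_powerset_apply_card
    (fun i => ((-1 : ℚ) ^ i) • PsiComp (List.replicate (n - i) 1 ++ [i + 1]))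
    ).trans ?_)
  rw [star_card]
  refine Finset.sum_congr rfl fun i _ => ?_
  rw [← Nat.cast_smul_eq_nsmul ℚ, smul_smul, mul_comm]

end
end

section
/- (Cho–van Willigenburg) Let {G_i}_{i ≥ 1} be a family of connected finite simple graphs with |V(G_i)| = i for every i. Then the chromatic symmetric functions X_{G_1}, X_{G_2}, … are algebraically independent over ℚ, and the ℚ-subalgebra of MvPowerSeries ℕ ℚ that they generate equals the ℚ-subalgebra generated by the power sums {p_n : n ≥ 1} (i.e., the algebra Sym of symmetric functions): Sym = ℚ[X_{G_1}, X_{G_2}, …]. -/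
open scoped Classical

noncomputable section

namespace CSF
open MvPowerSeries

def colSet {V : Type} [Fintype V] (w : V → ℕ) (L : List (V × V)) (d : ℕ →₀ ℕ) : Set (V → ℕ) :=
  {κ | (∀ e ∈ L, κ e.1 ≠ κ e.2) ∧ ∑ v, Finsupp.single (κ v) (w v) = d}

def WX {V : Type} [Fintype V] (w : V → ℕ) (L : List (V × V)) : MvPowerSeries ℕ ℚ :=
  fun d => ((colSet w L d).ncard : ℚ)

lemma colSet_finite {V : Type} [Fintype V] (w : V → ℕ) (hw : ∀ v, 0 < w v)
    (L : List (V × V)) (d : ℕ →₀ ℕ) : (colSet w L d).Finite := by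
  refine (Set.Finite.pi (ι := V) (t := fun _ => (d.support : Set ℕ))
    (fun _ => d.support.finite_toSet)).subset ?_
  rintro κ ⟨-, h⟩ v -
  simp only [Finset.mem_coe, Finsupp.mem_support_iff]
  rw [← h, Finsupp.finsetSum_apply]
  have := Finset.single_le_sum (f := fun x => (Finsupp.single (κ x) (w x)) (κ v))
    (fun _ _ => Nat.zero_le _) (Finset.mem_univ v)
  simp only [Finsupp.single_eq_same] at this
  have := hw v
  omega

lemma XG_eq {V : Type} [Fintype V] [DecidableEq V] (G : SimpleGraph V) :
    XG G = WX (fun _ => 1)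
      ((Finset.univ.filter (fun p : V × V => G.Adj p.1 p.2)).toList) := by
  funext d
  unfold XG WX
  congr 1
  change Set.ncard {κ : V → ℕ | _} = _
  congr 1
  ext κ
  simp only [colSet, Set.mem_ofPred_eq, Finset.mem_toList, Finset.mem_filter, Finset.mem_univ,
    true_and, Prod.forall, Proper]
  refine and_congr Iff.rfl ?_
  rw [Finsupp.ext_iff]
  refine forall_congr' fun c => ?_
  rw [Finsupp.finsetSum_apply]
  simp [Finsupp.single_apply, Finset.sum_boole]

lemma WX_loop {V : Type} [Fintype V] (w : V → ℕ) (u : V) (L : List (V × V)) :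
    WX w ((u, u) :: L) = 0 := by
  funext d
  have : colSet w ((u, u) :: L) d = ∅ := by
    ext κ
    simp [colSet]
  change ((colSet w ((u, u) :: L) d).ncard : ℚ) = 0
  rw [this]
  simp

lemma WX_nil {V : Type} [Fintype V] (w : V → ℕ) (hw : ∀ v, 0 < w v) :
    WX w [] = ∏ v, psum (w v) := by
  ext d
  rw [coeff_prod]
  change ((colSet w [] d).ncard : ℚ) = _
  have h1 : ∀ l : V →₀ (ℕ →₀ ℕ), ∏ v, coeff (l v) (psum (w v)) =
      if ∀ v, ∃ i, l v = Finsupp.single i (w v) then (1 : ℚ) else 0 := by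
    intro l
    change ∏ v, (if ∃ i : ℕ, l v = Finsupp.single i (w v) then (1 : ℚ) else 0) = _
    rw [Finset.prod_boole]
    simp
  simp only [h1, Finset.sum_boole]
  congr 1
  rw [← Set.ncard_coe_finset]
  have hinj : Function.Injective (fun κ : V → ℕ =>
      (Finsupp.equivFunOnFinite.symm (fun v => Finsupp.single (κ v) (w v)) : V →₀ (ℕ →₀ ℕ))) := by
    intro κ κ' h
    funext v
    have := DFunLike.congr_fun h v
    simp only [Finsupp.equivFunOnFinite_symm_apply_apply] at this
    exact (Finsupp.single_left_inj (hw v).ne').1 this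
  rw [← Set.ncard_image_of_injective _ hinj]
  congr 1
  ext l
  simp only [Set.mem_image, colSet, Set.mem_ofPred_eq, Finset.coe_filter,
    Finset.mem_finsuppAntidiag]
  constructor
  · rintro ⟨κ, ⟨-, h⟩, rfl⟩
    refine ⟨⟨by simpa using h, by simp⟩, fun v => ⟨κ v, by simp⟩⟩
  · rintro ⟨⟨h, -⟩, h2⟩
    choose κ hκ using h2
    refine ⟨κ, ⟨by simp, ?_⟩, ?_⟩
    · rw [← h]; exact Finset.sum_congr rfl fun v _ => (hκ v).symm
    · ext1 v
      simp [hκ v]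

/-- fibre weights -/
def fw {V W : Type} [Fintype V] (π : V → W) (w : V → ℕ) (y : W) : ℕ :=
  ∑ x with π x = y, w x

lemma fw_pos {V W : Type} [Fintype V] (π : V → W) (hπ : Function.Surjective π) (w : V → ℕ)
    (hw : ∀ v, 0 < w v) (y : W) : 0 < fw π w y := by
  obtain ⟨x, rfl⟩ := hπ y
  exact Finset.sum_pos (fun _ _ => hw _) ⟨x, by simp⟩

lemma fw_sum {V W : Type} [Fintype V] [Fintype W] (π : V → W) (w : V → ℕ) :
    ∑ y, fw π w y = ∑ x, w x := Finset.sum_fiberwise _ _ _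

lemma fw_single {V W : Type} [Fintype V] [Fintype W] (π : V → W) (w : V → ℕ) (κ : W → ℕ) :
    ∑ y, Finsupp.single (κ y) (fw π w y) = ∑ x, Finsupp.single (κ (π x)) (w x) := by
  rw [← Finset.sum_fiberwise Finset.univ π]
  refine Finset.sum_congr rfl fun y _ => ?_
  unfold fw
  rw [Finsupp.single_finsetSum]
  refine Finset.sum_congr rfl fun x hx => ?_
  simp only [Finset.mem_filter] at hx
  rw [hx.2]

lemma WX_del_contr {V W : Type} [Fintype V] [Fintype W] (w : V → ℕ) (hw : ∀ v, 0 < w v)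
    (π : V → W) (hπ : Function.Surjective π) (u v : V)
    (hk : ∀ a b, π a = π b ↔ (a = b ∨ (a = u ∧ b = v) ∨ (a = v ∧ b = u)))
    (L : List (V × V)) :
    WX w ((u, v) :: L) = WX w L - WX (fw π w) (L.map (Prod.map π π)) := by
  rw [eq_sub_iff_add_eq]
  funext d
  change ((colSet w ((u, v) :: L) d).ncard : ℚ) + ((colSet (fw π w) (L.map (Prod.map π π)) d).ncard : ℚ)
    = ((colSet w L d).ncard : ℚ)
  rw [← Nat.cast_add]
  congr 1
  have hi : Function.Injective (fun κ : W → ℕ => κ ∘ π) := hπ.injective_comp_right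
  rw [← Set.ncard_image_of_injective _ hi, ← Set.ncard_union_eq ?_ (colSet_finite w hw _ _)
    ((colSet_finite _ (fw_pos π hπ w hw) _ _).image _)]
  · congr 1
    ext κ
    simp only [Set.mem_union, Set.mem_image, colSet, Set.mem_ofPred_eq, List.mem_cons,
      forall_eq_or_imp, List.forall_mem_map, fw_single]
    constructor
    · rintro (⟨⟨-, h⟩, h2⟩ | ⟨κ', ⟨h, h2⟩, rfl⟩)
      · exact ⟨h, h2⟩
      · exact ⟨h, h2⟩
    · rintro ⟨h, h2⟩
      by_cases huv : κ u = κ v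
      · right
        have hf : ∀ a b, π a = π b → κ a = κ b := by
          intro a b hab
          rcases (hk a b).1 hab with rfl | ⟨rfl, rfl⟩ | ⟨rfl, rfl⟩
          · rfl
          · exact huv
          · exact huv.symm
        have hfac : ∀ a, κ (Function.surjInv hπ (π a)) = κ a := fun a =>
          hf _ _ (Function.surjInv_eq hπ _)
        refine ⟨κ ∘ Function.surjInv hπ, ⟨?_, ?_⟩, ?_⟩
        · intro e he
          simpa [hfac] using h e he
        · simpa [hfac] using h2
        · funext a
          simp [hfac]
      · left
        exact ⟨⟨huv, h⟩, h2⟩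
  · rw [Set.disjoint_left]
    rintro κ ⟨h, -⟩ ⟨κ', -, rfl⟩
    exact h (u, v) (by simp) (by simp [(hk u v).2 (by simp)])

def psAlg (N : ℕ) : Subalgebra ℚ (MvPowerSeries ℕ ℚ) :=
  Algebra.adjoin ℚ {x | ∃ k : ℕ, 1 ≤ k ∧ k < N ∧ x = psum k}

lemma exists_contr {V : Type} [Fintype V] (u v : V) (huv : u ≠ v) :
    ∃ π : V → {x : V // x ≠ v}, Function.Surjective π ∧
      ∀ a b, π a = π b ↔ (a = b ∨ (a = u ∧ b = v) ∨ (a = v ∧ b = u)) := by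
  refine ⟨fun x => if h : x = v then ⟨u, huv⟩ else ⟨x, h⟩, ?_, ?_⟩
  · rintro ⟨x, hx⟩
    exact ⟨x, by simp [hx]⟩
  · intro a b
    by_cases ha : a = v <;> by_cases hb : b = v
    · simp [ha, hb]
    · simp only [ha, hb, dite_true, dite_false, Subtype.mk.injEq]
      grind
    · simp only [ha, hb, dite_true, dite_false, Subtype.mk.injEq]
      grind
    · simp only [ha, hb, dite_false, Subtype.mk.injEq]
      grind

def Conn {V : Type} (L : List (V × V)) : Prop :=
  ∀ x y, Relation.EqvGen (fun a b => (a, b) ∈ L) x y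

lemma conn_of_eqv {V : Type} (L : List (V × V)) (u v : V) (h : Conn ((u, v) :: L))
    (huv : Relation.EqvGen (fun a b => (a, b) ∈ L) u v) : Conn L := by
  intro x y
  induction h x y with
  | rel a b hab =>
    rcases List.mem_cons.1 hab with h | h
    · obtain ⟨rfl, rfl⟩ := Prod.mk.inj h
      exact huv
    · exact .rel _ _ h
  | refl a => exact .refl _
  | symm a b _ ih => exact .symm _ _ ih
  | trans a b c _ _ h1 h2 => exact .trans _ _ _ h1 h2

lemma conn_map {V W : Type} (L : List (V × V)) (u v : V) (h : Conn ((u, v) :: L))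
    (π : V → W) (hπ : Function.Surjective π) (huv : π u = π v) :
    Conn (L.map (Prod.map π π)) := by
  intro x y
  obtain ⟨x, rfl⟩ := hπ x
  obtain ⟨y, rfl⟩ := hπ y
  induction h x y with
  | rel a b hab =>
    rcases List.mem_cons.1 hab with h | h
    · obtain ⟨rfl, rfl⟩ := Prod.mk.inj h
      rw [huv]
      exact .refl _
    · exact .rel _ _ (List.mem_map.2 ⟨(a, b), h, rfl⟩)
  | refl a => exact .refl _
  | symm a b _ ih => exact .symm _ _ ih
  | trans a b c _ _ h1 h2 => exact .trans _ _ _ h1 h2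

theorem WX_main (n : ℕ) : ∀ (V : Type) [Fintype V] [Nonempty V] (w : V → ℕ)
    (_ : ∀ v, 0 < w v) (L : List (V × V)) (_ : L.length = n),
    ∃ (a : ℚ) (r : MvPowerSeries ℕ ℚ), r ∈ psAlg (∑ v, w v) ∧
      WX w L = a • psum (∑ v, w v) + r ∧ 0 ≤ (-1) ^ (Fintype.card V + 1) * a ∧
      ((∀ e ∈ L, e.1 ≠ e.2) → Conn L → a ≠ 0) := by
  induction n with
  | zero =>
    intro V _ _ w hw L hL
    obtain rfl := List.length_eq_zero_iff.1 hL
    rw [WX_nil w hw]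
    rcases subsingleton_or_nontrivial V with hs | hn
    · obtain ⟨v⟩ := ‹Nonempty V›
      have : Unique V := ⟨⟨v⟩, fun _ => Subsingleton.elim _ _⟩
      refine ⟨1, 0, zero_mem _, by simp, by simp, by simp⟩
    · refine ⟨0, _, ?_, (by rw [zero_smul, zero_add]), by simp, ?_⟩
      · refine Subalgebra.prod_mem _ fun v _ => Algebra.subset_adjoin ⟨w v, hw v, ?_, rfl⟩
        obtain ⟨v', hv'⟩ := exists_ne v
        exact Finset.single_lt_sum hv' (Finset.mem_univ _) (Finset.mem_univ _) (hw _)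
          (fun _ _ _ => Nat.zero_le _)
      · intro _ hc
        exfalso
        obtain ⟨x, y, hxy⟩ := exists_pair_ne V
        apply hxy
        have hc := hc x y
        clear hxy
        induction hc with
        | rel a b hab => simp at hab
        | refl a => rfl
        | symm a b _ ih => exact ih.symm
        | trans a b c _ _ h1 h2 => exact h1.trans h2
  | succ n ih =>
    intro V _ _ w hw L hL
    obtain _ | ⟨⟨u, v⟩, L⟩ := L
    · simp at hL
    simp only [List.length_cons, add_left_inj] at hL
    by_cases huv : u = v
    · subst huv
      refine ⟨0, 0, zero_mem _, by rw [WX_loop]; simp, by simp, ?_⟩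
      intro h
      exact absurd rfl (h (u, u) (by simp))
    obtain ⟨π, hπ, hk⟩ := exists_contr u v huv
    have : Nonempty {x : V // x ≠ v} := ⟨⟨u, huv⟩⟩
    obtain ⟨a, r, hr, h1, h2, h3⟩ := ih V w hw L hL
    obtain ⟨a', r', hr', h1', h2', h3'⟩ := ih _ (fw π w) (fw_pos π hπ w hw)
      (L.map (Prod.map π π)) (by simpa using hL)
    rw [fw_sum] at h1' hr'
    have hcard : Fintype.card V = Fintype.card {x : V // x ≠ v} + 1 := by
      have := Fintype.card_subtype_compl (fun x : V => x = v)
      have h0 : 0 < Fintype.card V := Fintype.card_pos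
      simp only [Fintype.card_subtype_eq] at this
      simp only [ne_eq]
      omega
    rw [hcard] at h2 ⊢
    generalize Fintype.card {x : V // x ≠ v} = m at *
    refine ⟨a - a', r - r', sub_mem hr hr', ?_, ?_, ?_⟩
    · rw [WX_del_contr w hw π hπ u v hk, h1, h1', sub_smul]
      abel
    · rw [pow_succ] at h2 ⊢
      linarith
    · intro hl hc h0
      have ha : a = a' := by linarith
      subst ha
      have hz : a = 0 := by
        have : (-1 : ℚ) ^ (m + 1) * a = 0 := by
          rw [pow_succ] at h2
          linarith
        simpa using this
      subst hz
      have hl' : ∀ e ∈ L, e.1 ≠ e.2 := fun e he => hl e (List.mem_cons_of_mem _ he)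
      have hnc : ¬ Conn L := fun h => h3 hl' h rfl
      refine h3' ?_ (conn_map L u v hc π hπ ((hk u v).2 (by simp))) rfl
      rw [List.forall_mem_map]
      rintro ⟨x, y⟩ he heq
      rcases (hk x y).1 heq with h | ⟨rfl, rfl⟩ | ⟨rfl, rfl⟩
      · exact hl' _ he h
      · exact hnc (conn_of_eqv L _ _ hc (.rel _ _ he))
      · exact hnc (conn_of_eqv L _ _ hc (.symm _ _ (.rel _ _ he)))

theorem XG_main (n : ℕ) (G : SimpleGraph (Fin (n + 1))) (hG : G.Connected) :
    ∃ (a : ℚ) (r : MvPowerSeries ℕ ℚ), a ≠ 0 ∧ r ∈ psAlg (n + 1) ∧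
      XG G = a • psum (n + 1) + r := by
  obtain ⟨a, r, hr, h1, -, h3⟩ := WX_main _ (Fin (n + 1)) (fun _ => 1) (by simp)
    ((Finset.univ.filter (fun p : Fin (n + 1) × Fin (n + 1) => G.Adj p.1 p.2)).toList) rfl
  rw [← XG_eq] at h1
  simp only [Finset.sum_const, Finset.card_univ, Fintype.card_fin, smul_eq_mul, mul_one] at hr h1
  refine ⟨a, r, h3 ?_ ?_, hr, h1⟩
  · intro e he
    simp only [Finset.mem_toList, Finset.mem_filter, Finset.mem_univ, true_and] at he
    exact he.ne
  · intro x y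
    obtain ⟨p⟩ := hG.preconnected x y
    induction p with
    | nil => exact .refl _
    | cons h _ ih => exact .trans _ _ _ (.rel _ _ (by simpa using h)) ih

lemma pderiv_psum (i k : ℕ) (hk : 1 ≤ k) :
    pderiv ℚ i (psum k) = (k : MvPowerSeries ℕ ℚ) * (X i : MvPowerSeries ℕ ℚ) ^ (k - 1) := by
  ext n
  rw [coeff_pderiv, ← nsmul_eq_mul, map_nsmul, coeff_X_pow]
  change (if ∃ j : ℕ, n + Finsupp.single i 1 = Finsupp.single j k then (1 : ℚ) else 0) * _ = _
  by_cases h : n = Finsupp.single i (k - 1)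
  · rw [if_pos h, if_pos]
    · subst h
      simp [Nat.cast_sub hk]
    · refine ⟨i, ?_⟩
      rw [h, ← Finsupp.single_add, Nat.sub_add_cancel hk]
  · rw [if_neg h, if_neg]
    · simp
    · rintro ⟨j, hj⟩
      apply h
      have hij : i = j := by
        by_contra hij
        have := DFunLike.congr_fun hj i
        simp [Finsupp.single_apply, Ne.symm hij] at this
      subst hij
      ext x
      have := DFunLike.congr_fun hj x
      simp only [Finsupp.add_apply, Finsupp.single_apply] at this ⊢
      split_ifs at this ⊢ <;> omega

lemma exists_poly (N : ℕ) (r : MvPowerSeries ℕ ℚ) (hr : r ∈ psAlg (N + 1)) :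
    ∃ q ∈ Polynomial.degreeLT (MvPowerSeries ℕ ℚ) N, ∀ i : ℕ, pderiv ℚ i r = q.eval (X i) := by
  induction hr using Algebra.adjoin_induction with
  | mem x hx =>
    obtain ⟨k, hk, hkN, rfl⟩ := hx
    refine ⟨Polynomial.C (k : MvPowerSeries ℕ ℚ) * Polynomial.X ^ (k - 1), ?_, ?_⟩
    · rw [Polynomial.mem_degreeLT]
      refine (Polynomial.degree_C_mul_X_pow_le _ _).trans_lt ?_
      exact_mod_cast (by omega : k - 1 < N)
    · intro i
      rw [pderiv_psum i k hk]
      simp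
  | algebraMap c => exact ⟨0, zero_mem _, fun i => by simp⟩
  | add x y _ _ hx hy =>
    obtain ⟨q, hq, h⟩ := hx
    obtain ⟨q', hq', h'⟩ := hy
    exact ⟨q + q', add_mem hq hq', fun i => by simp [h, h']⟩
  | mul x y _ _ hx hy =>
    obtain ⟨q, hq, h⟩ := hx
    obtain ⟨q', hq', h'⟩ := hy
    exact ⟨x • q' + y • q, add_mem (Submodule.smul_mem _ _ hq') (Submodule.smul_mem _ _ hq),
      fun i => by simp [h, h']⟩

lemma exists_poly_top (N : ℕ) (a : ℚ) (ha : a ≠ 0) (r : MvPowerSeries ℕ ℚ)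
    (hr : r ∈ psAlg (N + 1)) :
    ∃ q : Polynomial (MvPowerSeries ℕ ℚ), q.degree = N ∧
      ∀ i : ℕ, pderiv ℚ i (a • psum (N + 1) + r) = q.eval (X i) := by
  obtain ⟨q, hq, h⟩ := exists_poly N r hr
  rw [Polynomial.mem_degreeLT] at hq
  have hc : algebraMap ℚ (MvPowerSeries ℕ ℚ) (a * (N + 1)) ≠ 0 := by
    rw [Ne, FaithfulSMul.algebraMap_eq_zero_iff]
    positivity
  have hd := Polynomial.degree_C_mul_X_pow N hc
  refine ⟨Polynomial.C (algebraMap ℚ (MvPowerSeries ℕ ℚ) (a * (N + 1))) * Polynomial.X ^ N + q,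
    ?_, ?_⟩
  · rw [Polynomial.degree_add_eq_left_of_degree_lt (by rwa [hd]), hd]
  · intro i
    rw [map_add, Derivation.map_smul, pderiv_psum i _ (by omega), h]
    simp only [Polynomial.eval_add, Polynomial.eval_mul, Polynomial.eval_C, Polynomial.eval_pow,
      Polynomial.eval_X, Algebra.smul_def, map_mul, map_add, map_natCast, map_one]
    push_cast
    simp [mul_assoc]

lemma chain {A : Type*} [CommRing A] [Algebra ℚ A] (f : ℕ → A) (P : MvPolynomial ℕ ℚ) :
    ∃ s : Finset ℕ, ∀ t, s ⊆ t → ∀ D : Derivation ℚ A A,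
      D (MvPolynomial.aeval f P) =
        ∑ j ∈ t, MvPolynomial.aeval f (MvPolynomial.pderiv j P) * D (f j) := by
  induction P using MvPolynomial.induction_on with
  | C a => exact ⟨∅, fun t _ D => by simp⟩
  | add p q hp hq =>
    obtain ⟨s, hs⟩ := hp
    obtain ⟨s', hs'⟩ := hq
    refine ⟨s ∪ s', fun t ht D => ?_⟩
    simp only [map_add, hs t (Finset.union_subset_left ht) D,
      hs' t (Finset.union_subset_right ht) D, add_mul, Finset.sum_add_distrib]
  | mul_X p i hp =>
    obtain ⟨s, hs⟩ := hp
    refine ⟨insert i s, fun t ht D => ?_⟩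
    have hi : i ∈ t := ht (Finset.mem_insert_self _ _)
    simp only [map_mul, MvPolynomial.aeval_X, Derivation.leibniz, smul_eq_mul,
      hs t ((Finset.subset_insert _ _).trans ht) D, map_add, add_mul, Finset.sum_add_distrib,
      MvPolynomial.pderiv_X, Finset.mul_sum]
    congr 1
    · rw [Finset.sum_eq_single_of_mem i hi]
      · simp
      · intro b _ hb
        simp [Pi.single_apply, hb.symm]
    · exact Finset.sum_congr rfl fun _ _ => by ring

lemma algInd (f : ℕ → MvPowerSeries ℕ ℚ) (q : ℕ → Polynomial (MvPowerSeries ℕ ℚ))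
    (hq : ∀ n, (q n).degree = n) (hf : ∀ n i, pderiv ℚ i (f n) = (q n).eval (X i)) :
    AlgebraicIndependent ℚ f := by
  have : IsDomain (MvPowerSeries ℕ ℚ) := NoZeroDivisors.to_isDomain _
  rw [algebraicIndependent_iff]
  suffices H : ∀ n : ℕ, ∀ P : MvPolynomial ℕ ℚ, P.totalDegree ≤ n →
      MvPolynomial.aeval f P = 0 → P = 0 from fun P h => H _ P le_rfl h
  intro n
  induction n with
  | zero =>
    intro P hP h
    obtain ⟨c, rfl⟩ : ∃ c, P = MvPolynomial.C c :=
      ⟨_, MvPolynomial.totalDegree_eq_zero_iff_eq_C.1 (Nat.le_zero.1 hP)⟩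
    rw [MvPolynomial.aeval_C, FaithfulSMul.algebraMap_eq_zero_iff] at h
    rw [h, map_zero]
  | succ n ih =>
    intro P hP h
    have hD : ∀ j, MvPolynomial.aeval f (MvPolynomial.pderiv j P) = 0 := by
      intro j
      obtain ⟨s, hs⟩ := chain f P
      have hs := hs (insert j s) (Finset.subset_insert _ _)
      rw [h] at hs
      simp only [map_zero] at hs
      have hQ : ∑ k ∈ insert j s, MvPolynomial.aeval f (MvPolynomial.pderiv k P) • q k = 0 := by
        apply Polynomial.eq_zero_of_infinite_isRoot
        have hinj : Function.Injective (X : ℕ → MvPowerSeries ℕ ℚ) := fun _ _ h => MvPowerSeries.X_inj.1 h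
        refine (Set.infinite_range_of_injective hinj).mono ?_
        rintro _ ⟨i, rfl⟩
        change Polynomial.eval _ _ = 0
        rw [Polynomial.eval_finsetSum]
        refine Eq.trans ?_ (hs (pderiv ℚ i)).symm
        exact Finset.sum_congr rfl fun k _ => by rw [hf]; simp
      have hli := (Polynomial.Sequence.mk q hq).linearIndependent
      exact linearIndependent_iff'.1 hli _ _ hQ j (Finset.mem_insert_self _ _)
    have hD0 : ∀ j, MvPolynomial.pderiv j P = 0 := by
      intro j
      refine ih _ ?_ (hD j)
      refine Finset.sup_le fun m hm => ?_
      rw [MvPolynomial.mem_support_iff, MvPolynomial.coeff_pderiv] at hm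
      have h2 := MvPolynomial.le_totalDegree (MvPolynomial.mem_support_iff.2 (left_ne_zero_of_mul hm))
      rw [Finsupp.sum_add_index' (by simp) (by simp)] at h2
      simp only [Finsupp.sum_single_index] at h2
      omega
    have hc : P = MvPolynomial.C (MvPolynomial.coeff 0 P) := by
      ext m
      rw [MvPolynomial.coeff_C]
      split_ifs with hm
      · rw [← hm]
      · obtain ⟨j, hj⟩ := Finsupp.ne_iff.1 (Ne.symm hm)
        have := congrArg (MvPolynomial.coeff (m - Finsupp.single j 1)) (hD0 j)
        rw [MvPolynomial.coeff_pderiv, tsub_add_cancel_of_le] at this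
        · rw [MvPolynomial.coeff_zero, mul_eq_zero] at this
          refine this.resolve_right ?_
          positivity
        · rw [Finsupp.single_le_iff]
          simp at hj
          omega
    rw [hc] at h ⊢
    rw [MvPolynomial.aeval_C, FaithfulSMul.algebraMap_eq_zero_iff] at h
    rw [h, map_zero]

end CSF

theorem sym_free_on_chromatic_generators
    (G : ∀ i : ℕ, SimpleGraph (Fin (i + 1)))
    (hconn : ∀ i, (G i).Connected) :
    AlgebraicIndependent ℚ (fun i : ℕ => XG (G i)) ∧
    Algebra.adjoin ℚ (Set.range fun i : ℕ => XG (G i)) =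
      Algebra.adjoin ℚ {x : MvPowerSeries ℕ ℚ | ∃ n : ℕ, 1 ≤ n ∧ x = psum n} := by
  choose a r ha hr h using fun i => CSF.XG_main i (G i) (hconn i)
  constructor
  · choose q hq hf using fun i => CSF.exists_poly_top i (a i) (ha i) (r i) (hr i)
    refine CSF.algInd _ q hq fun n i => ?_
    rw [← hf, h]
  · apply le_antisymm
    · rw [Algebra.adjoin_le_iff]
      rintro _ ⟨i, rfl⟩
      change XG (G i) ∈ _
      rw [h]
      refine add_mem (Subalgebra.smul_mem _ (Algebra.subset_adjoin (Set.mem_ofPred.2 ⟨i + 1, by omega, rfl⟩)) _) ?_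
      refine Algebra.adjoin_mono ?_ (hr i)
      rintro _ ⟨k, hk, -, rfl⟩
      exact ⟨k, hk, rfl⟩
    · rw [Algebra.adjoin_le_iff]
      rintro _ ⟨n, hn, rfl⟩
      induction n using Nat.strong_induction_on with
      | _ n ih =>
        obtain ⟨i, rfl⟩ : ∃ i, n = i + 1 := ⟨n - 1, by omega⟩
        have hle : CSF.psAlg (i + 1) ≤ Algebra.adjoin ℚ (Set.range fun i : ℕ => XG (G i)) := by
          refine Algebra.adjoin_le ?_
          rintro _ ⟨k, hk, hk2, rfl⟩
          exact ih k hk2 hk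
        have he : psum (i + 1) = (a i)⁻¹ • (XG (G i) - r i) := by
          rw [h, add_sub_cancel_right, smul_smul, inv_mul_cancel₀ (ha i), one_smul]
        rw [he]
        exact Subalgebra.smul_mem _
          (sub_mem (Algebra.subset_adjoin (Set.mem_range_self i)) (hle (hr i))) _

end
end

section
/- (Stanley's power sum expansion) Let G be a finite simple graph with vertex set V and edge set E. Then X_G = Σ_{S ⊆ E} (−1)^{|S|} p_{λ(S)}, where for S ⊆ E, λ(S) is the partition of |V| whose parts are the sizes, sorted weakly decreasingly, of the connected components of the spanning subgraph (V, S). -/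
open scoped Classical

noncomputable section

/-- The set of connected components (as vertex subsets) of the spanning subgraph
`(V, S)` determined by a set `S` of undirected edges. -/
def compsE {V : Type} [Fintype V] [DecidableEq V] (S : Finset (Sym2 V)) :
    Finset (Finset V) :=
  Finset.univ.image
    (fun v => Finset.univ.filter
      (fun w => (SimpleGraph.fromEdgeSet (S : Set (Sym2 V))).Reachable v w))

/-- The partition `λ(S)`: the sizes of the connected components of the spanning
subgraph `(V, S)`, sorted weakly decreasingly. -/
def lamE {V : Type} [Fintype V] [DecidableEq V] (S : Finset (Sym2 V)) : List ℕ :=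
  ((compsE S).toList.map Finset.card).mergeSort (fun a b => decide (b ≤ a))

def cont {V : Type} [Fintype V] (κ : V → ℕ) : ℕ →₀ ℕ := ∑ v, Finsupp.single (κ v) 1

lemma cont_apply {V : Type} [Fintype V] (κ : V → ℕ) (c : ℕ) :
    cont κ c = (Finset.univ.filter (fun v => κ v = c)).card := by
  simp [cont, Finsupp.finsetSum_apply, Finsupp.single_apply]

def colT {V : Type} [Fintype V] [DecidableEq V] (d : ℕ →₀ ℕ) : Finset (V → ℕ) :=
  (Fintype.piFinset (fun _ : V => d.support)).filter (fun κ => cont κ = d)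

lemma mem_colT {V : Type} [Fintype V] [DecidableEq V] (d : ℕ →₀ ℕ) (κ : V → ℕ) :
    κ ∈ colT d ↔ cont κ = d := by
  simp only [colT, Finset.mem_filter, Fintype.mem_piFinset, and_iff_right_iff_imp]
  rintro rfl v
  rw [Finsupp.mem_support_iff, cont_apply]
  exact Finset.card_ne_zero_of_mem (a := v) (by simp)

lemma coeff_XG {V : Type} [Fintype V] [DecidableEq V] (G : SimpleGraph V) (d : ℕ →₀ ℕ) :
    MvPowerSeries.coeff d (XG G) = (((colT d).filter (fun κ => Proper G κ)).card : ℚ) := by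
  change (Nat.card _ : ℚ) = _
  congr 1
  rw [← Nat.card_eq_finsetCard]
  refine Nat.card_congr (Equiv.subtypeEquivRight fun κ => ?_)
  rw [Finset.mem_filter, mem_colT, and_comm, Finsupp.ext_iff]
  simp only [cont_apply]

def compOf {V : Type} [Fintype V] (S : Finset (Sym2 V)) (v : V) : Finset V :=
  Finset.univ.filter
      (fun w => (SimpleGraph.fromEdgeSet (S : Set (Sym2 V))).Reachable v w)

lemma mem_compOf {V : Type} [Fintype V] (S : Finset (Sym2 V)) (v w : V) :
    w ∈ compOf S v ↔ (SimpleGraph.fromEdgeSet (S : Set (Sym2 V))).Reachable v w := by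
  simp [compOf]

lemma compOf_eq {V : Type} [Fintype V] (S : Finset (Sym2 V)) (v w : V) :
    compOf S w = compOf S v ↔ w ∈ compOf S v := by
  constructor
  · intro h
    rw [← h, mem_compOf]
  · intro h
    rw [mem_compOf] at h
    ext x
    rw [mem_compOf, mem_compOf]
    exact ⟨fun k => h.trans k, fun k => h.symm.trans k⟩

def Mono {V : Type} (S : Finset (Sym2 V)) (κ : V → ℕ) : Prop :=
  ∀ u v, s(u, v) ∈ S → κ u = κ v

lemma mono_iff {V : Type} [Fintype V] (S : Finset (Sym2 V)) (κ : V → ℕ) :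
    Mono S κ ↔ ∀ u v, v ∈ compOf S u → κ v = κ u := by
  constructor
  · intro h u v hv
    rw [mem_compOf] at hv
    obtain ⟨p⟩ := hv
    induction p with
    | nil => rfl
    | cons hadj _ ih =>
      rw [SimpleGraph.fromEdgeSet_adj] at hadj
      rw [ih, h _ _ hadj.1]
  · intro h u v huv
    by_cases e : u = v
    · rw [e]
    · symm
      apply h
      rw [mem_compOf]
      apply SimpleGraph.Adj.reachable
      rw [SimpleGraph.fromEdgeSet_adj]
      exact ⟨huv, e⟩

lemma mem_compsE {V : Type} [Fintype V] [DecidableEq V] (S : Finset (Sym2 V)) (C : Finset V) :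
    C ∈ compsE S ↔ ∃ v, compOf S v = C := by
  simp only [compsE, compOf, Finset.mem_image, Finset.mem_univ, true_and]
  congr!

lemma sum_compsE {V M : Type} [Fintype V] [DecidableEq V] [AddCommMonoid M]
    (S : Finset (Sym2 V)) (f : V → M) :
    ∑ C ∈ compsE S, ∑ v ∈ C, f v = ∑ v, f v := by
  rw [← Finset.sum_fiberwise_of_maps_to (s := Finset.univ) (t := compsE S) (g := compOf S)
    (fun v _ => (mem_compsE S _).2 ⟨v, rfl⟩)]
  refine Finset.sum_congr rfl fun C hC => Finset.sum_congr ?_ fun _ _ => rfl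
  obtain ⟨u, rfl⟩ := (mem_compsE S _).1 hC
  ext w
  simp [compOf_eq]

lemma psumProd_lamE {V : Type} [Fintype V] [DecidableEq V] (S : Finset (Sym2 V)) :
    psumProd (lamE S) = ∏ C ∈ compsE S, psum C.card := by
  unfold psumProd lamE
  rw [((List.mergeSort_perm _ _).map psum).prod_eq, List.map_map, Finset.prod_map_toList]
  rfl

lemma mono_sum {V : Type} [Fintype V] {S : Finset (Sym2 V)} {κ : V → ℕ}
    (h : Mono S κ) (u : V) :
    ∑ v ∈ compOf S u, Finsupp.single (κ v) 1 = Finsupp.single (κ u) (compOf S u).card := by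
  rw [mono_iff] at h
  rw [Finset.sum_congr rfl (g := fun _ => Finsupp.single (κ u) 1) (fun v hv => by rw [h u v hv])]
  simp

lemma card_compOf_pos {V : Type} [Fintype V] (S : Finset (Sym2 V)) (u : V) :
    (compOf S u).card ≠ 0 :=
  Finset.card_ne_zero_of_mem (a := u) ((mem_compOf _ _ _).2 (SimpleGraph.Reachable.refl _))

lemma coeff_psumProd {V : Type} [Fintype V] [DecidableEq V] (S : Finset (Sym2 V))
    (d : ℕ →₀ ℕ) :
    MvPowerSeries.coeff d (psumProd (lamE S))
      = (((colT d).filter (fun κ => Mono S κ)).card : ℚ) := by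
  rw [psumProd_lamE, MvPowerSeries.coeff_prod]
  have h1 : ∀ l ∈ Finset.finsuppAntidiag (compsE S) d,
      ∏ C ∈ compsE S, MvPowerSeries.coeff (l C) (psum C.card)
      = if ∀ C ∈ compsE S, ∃ i : ℕ, l C = Finsupp.single i C.card then (1:ℚ) else 0 := by
    intro l _
    have h2 := Finset.prod_ite_zero (s := compsE S) (f := fun _ => (1 : ℚ))
      (p := fun C => ∃ i : ℕ, l C = Finsupp.single i C.card)
    rw [Finset.prod_const_one] at h2
    refine Eq.trans ?_ (h2.trans ?_)
    · rfl
    · congr!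
  rw [Finset.sum_congr rfl h1, Finset.sum_boole]
  congr 1
  symm
  refine Finset.card_bij
    (fun κ _ => Finsupp.indicator (compsE S) (fun C _ => ∑ v ∈ C, Finsupp.single (κ v) 1))
    ?_ ?_ ?_
  · intro κ hκ
    rw [Finset.mem_filter, mem_colT] at hκ
    obtain ⟨hd, hm⟩ := hκ
    rw [Finset.mem_filter, Finset.mem_finsuppAntidiag]
    refine ⟨⟨?_, Finsupp.support_indicator_subset _ _⟩, ?_⟩
    · rw [← hd, cont, ← sum_compsE S]
      exact Finset.sum_congr rfl fun C hC => Finsupp.indicator_of_mem hC _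
    · intro C hC
      rw [Finsupp.indicator_of_mem hC]
      obtain ⟨u, rfl⟩ := (mem_compsE S _).1 hC
      exact ⟨_, mono_sum hm u⟩
  · intro κ hκ κ' hκ' h
    rw [Finset.mem_filter, mem_colT] at hκ hκ'
    funext u
    have hC : compOf S u ∈ compsE S := (mem_compsE S _).2 ⟨u, rfl⟩
    have h2 := DFunLike.congr_fun h (compOf S u)
    simp only [Finsupp.indicator_of_mem hC] at h2
    rw [mono_sum hκ.2, mono_sum hκ'.2] at h2
    exact Finsupp.single_left_injective (card_compOf_pos S u) h2
  · intro l hl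
    rw [Finset.mem_filter, Finset.mem_finsuppAntidiag] at hl
    obtain ⟨⟨hs, hsup⟩, hl⟩ := hl
    have hC : ∀ u, compOf S u ∈ compsE S := fun u => (mem_compsE S _).2 ⟨u, rfl⟩
    choose! g hg using hl
    have hm : Mono S (fun v => g (compOf S v)) := by
      rw [mono_iff]
      intro u v hv
      simp only [(compOf_eq S u v).2 hv]
    have key : ∀ C ∈ compsE S, ∑ v ∈ C, Finsupp.single (g (compOf S v)) 1 = l C := by
      intro C hC'
      obtain ⟨u, rfl⟩ := (mem_compsE S _).1 hC'
      rw [hg _ hC']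
      exact mono_sum hm u
    refine ⟨fun v => g (compOf S v), ?_, ?_⟩
    · rw [Finset.mem_filter, mem_colT]
      refine ⟨?_, hm⟩
      rw [cont, ← sum_compsE S, ← hs]
      exact Finset.sum_congr rfl key
    · ext1 C
      by_cases hC' : C ∈ compsE S
      · rw [Finsupp.indicator_of_mem hC', key C hC']
      · rw [Finsupp.indicator_of_notMem hC']
        symm
        exact Finsupp.notMem_support_iff.1 fun h => hC' (hsup h)

lemma stanley_sign_sum {V : Type} [Fintype V] [DecidableEq V]
    (G : SimpleGraph V) [DecidableRel G.Adj] (κ : V → ℕ) :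
    ∑ S ∈ G.edgeFinset.powerset, (if Mono S κ then ((-1 : ℚ) ^ S.card) else 0)
      = if Proper G κ then 1 else 0 := by
  rw [← Finset.sum_filter]
  have h : G.edgeFinset.powerset.filter (fun S => Mono S κ)
      = (G.edgeFinset.filter (fun e => (e.map κ).IsDiag)).powerset := by
    ext S
    rw [Finset.mem_filter, Finset.mem_powerset, Finset.mem_powerset]
    simp only [Finset.subset_iff, Finset.mem_filter, Mono]
    constructor
    · rintro ⟨h1, h2⟩ e
      induction e with | _ u v
      intro he
      exact ⟨h1 he, by simpa using h2 u v he⟩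
    · intro h
      exact ⟨fun e he => (h he).1, fun u v huv => by simpa using (h huv).2⟩
  rw [h]
  have h2 := congrArg (Int.cast : ℤ → ℚ)
    (Finset.sum_powerset_neg_one_pow_card (x := G.edgeFinset.filter (fun e => (e.map κ).IsDiag)))
  push_cast at h2
  rw [h2]
  refine if_congr ?_ rfl rfl
  rw [Finset.filter_eq_empty_iff]
  constructor
  · intro h u v huv e
    exact h (x := s(u, v)) (by simpa using huv) (by simpa using e)
  · intro h e
    induction e with | _ u v
    intro he
    simpa using h u v (by simpa using he)

/-- Stanley's power sum expansion.  For a finite simple graph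
`G = (V, E)`, `X_G = Σ_{S ⊆ E} (−1)^{|S|} p_{λ(S)}`, where `λ(S)` is the partition of
`|V|` whose parts are the sizes of the connected components of the spanning subgraph
`(V, S)`. -/
theorem XG_psum_expansion {V : Type} [Fintype V] [DecidableEq V]
    (G : SimpleGraph V) [DecidableRel G.Adj] :
    XG G = ∑ S ∈ G.edgeFinset.powerset, ((-1 : ℚ) ^ S.card) • psumProd (lamE S) := by
  ext d
  rw [coeff_XG, map_sum]
  simp only [map_smul, smul_eq_mul, coeff_psumProd]
  simp only [Finset.card_filter, Nat.cast_sum, Nat.cast_ite, Nat.cast_one, Nat.cast_zero,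
    Finset.mul_sum, mul_ite, mul_one, mul_zero]
  rw [Finset.sum_comm]
  exact Finset.sum_congr rfl fun κ _ => (stanley_sign_sum G κ).symm

end
end

section
/- (Cho–van Willigenburg star formula) For every n ≥ 0, the chromatic symmetric function of the star graph S_{n+1} on n + 1 vertices satisfies X_{S_{n+1}} = Σ_{i=0}^{n} (−1)^i · binom(n, i) · p_{(i+1, 1^{n−i})}, where (i+1, 1^{n−i}) denotes the partition with one part equal to i + 1 and n − i parts equal to 1. -/
open scoped Classical

noncomputable section

/-- The star graph `S_{n+1}`: the simple graph on the `n + 1` vertices `Fin (n+1)`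
whose edges are `{0, v}` for each vertex `v ≠ 0`. -/
def starGraph (n : ℕ) : SimpleGraph (Fin (n + 1)) :=
  SimpleGraph.fromRel (fun u _ => u = 0)

def AgreeOn (S : Finset ℕ) (f g : MvPowerSeries ℕ ℚ) : Prop :=
  ∀ d : ℕ →₀ ℕ, d.support ⊆ S → MvPowerSeries.coeff d f = MvPowerSeries.coeff d g

lemma AgreeOn.mul {S : Finset ℕ} {f g f' g' : MvPowerSeries ℕ ℚ} (h : AgreeOn S f g) (h' : AgreeOn S f' g') :
    AgreeOn S (f * f') (g * g') := by
  intro d hd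
  rw [MvPowerSeries.coeff_mul, MvPowerSeries.coeff_mul]
  refine Finset.sum_congr rfl ?_
  rintro ⟨a, b⟩ hab
  rw [Finset.HasAntidiagonal.mem_antidiagonal] at hab
  simp only at hab ⊢
  rw [h a, h' b]
  · refine (Finsupp.support_mono ?_).trans hd
    rw [← hab]; exact le_add_self
  · refine (Finsupp.support_mono ?_).trans hd
    rw [← hab]; exact le_self_add

lemma AgreeOn.pow {S : Finset ℕ} {f g : MvPowerSeries ℕ ℚ} (h : AgreeOn S f g) (k : ℕ) :
    AgreeOn S (f ^ k) (g ^ k) := by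
  induction k with
  | zero => intro d _; simp
  | succ k ih => rw [pow_succ, pow_succ]; exact ih.mul h

lemma psum_rel (S : Finset ℕ) (k : ℕ) (hk : 0 < k) :
    AgreeOn S (psum k) (∑ i ∈ S, (MvPowerSeries.X i : MvPowerSeries ℕ ℚ) ^ k) := by
  intro d hd
  rw [map_sum]
  simp only [MvPowerSeries.coeff_X_pow]
  change (if ∃ i : ℕ, d = Finsupp.single i k then (1:ℚ) else 0) = _
  split_ifs with h
  · obtain ⟨i, rfl⟩ := h
    have hi : i ∈ S := by
      apply hd
      simp; omega
    rw [Finset.sum_eq_single i]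
    · simp
    · intro b _ hb
      rw [if_neg]
      intro h
      exact hb ((Finsupp.single_left_injective hk.ne' h).symm)
    · intro h; exact absurd hi h
  · symm
    apply Finset.sum_eq_zero
    intro i _
    rw [if_neg]
    intro h'; exact h ⟨i, h'⟩

lemma prod_X_eq {ι : Type} (s : Finset ι) (κ : ι → ℕ) :
    ∏ v ∈ s, (MvPowerSeries.X (κ v) : MvPowerSeries ℕ ℚ) =
      MvPowerSeries.monomial (∑ v ∈ s, Finsupp.single (κ v) 1) 1 := by
  classical
  induction s using Finset.induction_on with
  | empty => simp
  | insert a s ha ih =>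
    rw [Finset.prod_insert ha, Finset.sum_insert ha, ih, MvPowerSeries.X,
      MvPowerSeries.monomial_mul_monomial, one_mul]

lemma content_iff {m : ℕ} (κ : Fin m → ℕ) (d : ℕ →₀ ℕ) :
    (∀ c : ℕ, (Finset.univ.filter (fun v => κ v = c)).card = d c) ↔
      d = ∑ v, Finsupp.single (κ v) 1 := by
  rw [Finsupp.ext_iff]
  refine forall_congr' fun c => ?_
  rw [Finsupp.finsetSum_apply, Finset.card_filter]
  simp only [Finsupp.single_apply]
  exact eq_comm

lemma proper_star {n : ℕ} (κ : Fin (n + 1) → ℕ) :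
    Proper (starGraph n) κ ↔ ∀ j : Fin n, κ j.succ ≠ κ 0 := by
  unfold Proper starGraph
  simp only [SimpleGraph.fromRel_adj]
  constructor
  · intro h j
    exact h _ _ ⟨Fin.succ_ne_zero j, Or.inr rfl⟩
  · rintro h u v ⟨huv, rfl | rfl⟩
    · obtain ⟨j, rfl⟩ := Fin.exists_succ_eq.2 huv.symm
      exact (h j).symm
    · obtain ⟨j, rfl⟩ := Fin.exists_succ_eq.2 huv
      exact h j

lemma XG_coeff (n : ℕ) (d : ℕ →₀ ℕ) :
    MvPowerSeries.coeff d (XG (starGraph n)) =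
      MvPowerSeries.coeff d (∑ c ∈ d.support, (MvPowerSeries.X c : MvPowerSeries ℕ ℚ) *
        (∑ b ∈ d.support.erase c, MvPowerSeries.X b) ^ n) := by
  have h1 : ∀ c, (MvPowerSeries.X c : MvPowerSeries ℕ ℚ) *
        (∑ b ∈ d.support.erase c, MvPowerSeries.X b) ^ n =
      ∑ p ∈ Fintype.piFinset (fun _ : Fin n => d.support.erase c),
        MvPowerSeries.monomial
          (∑ v, Finsupp.single ((Fin.cons c p : Fin (n + 1) → ℕ) v) 1) 1 := by
    intro c
    have h2 := Finset.prod_univ_sum (fun _ : Fin n => d.support.erase c)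
      (fun _ b => (MvPowerSeries.X b : MvPowerSeries ℕ ℚ))
    rw [Finset.prod_const, Finset.card_univ, Fintype.card_fin] at h2
    rw [h2, Finset.mul_sum]
    refine Finset.sum_congr rfl fun p _ => ?_
    rw [← prod_X_eq, Fin.prod_univ_succ]
    simp
  simp only [h1]
  rw [Finset.sum_sigma', map_sum]
  simp only [MvPowerSeries.coeff_monomial]
  rw [← Finset.sum_filter, Finset.sum_const, nsmul_eq_mul, mul_one]
  change (Nat.card {κ : Fin (n + 1) → ℕ // Proper (starGraph n) κ ∧
      ∀ c : ℕ, (Finset.univ.filter (fun v => κ v = c)).card = d c} : ℚ) = _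
  rw [← Nat.card_eq_finsetCard]
  congr 1
  symm
  refine Nat.card_congr (Equiv.ofBijective (fun x => ⟨Fin.cons x.1.1 x.1.2, ?_⟩) ⟨?_, ?_⟩)
  · obtain ⟨⟨c, p⟩, hx⟩ := x
    simp only [Finset.mem_filter, Finset.mem_sigma, Fintype.mem_piFinset, Finset.mem_erase] at hx
    refine ⟨(proper_star _).2 fun j => ?_, (content_iff _ _).2 hx.2⟩
    simpa using (hx.1.2 j).1
  · rintro ⟨⟨c, p⟩, hx⟩ ⟨⟨c', p'⟩, hx'⟩ h
    simp only [Subtype.mk.injEq] at h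
    obtain ⟨rfl, rfl⟩ := Fin.cons_inj.1 h
    rfl
  · rintro ⟨κ, hp, hc⟩
    rw [proper_star] at hp
    have hs : ∀ v, κ v ∈ d.support := by
      intro v
      rw [Finsupp.mem_support_iff, ← hc]
      exact (Finset.card_pos.2 ⟨v, by simp⟩).ne'
    refine ⟨⟨⟨κ 0, fun j => κ j.succ⟩, ?_⟩, ?_⟩
    · simp only [Finset.mem_filter, Finset.mem_sigma, Fintype.mem_piFinset, Finset.mem_erase]
      refine ⟨⟨hs 0, fun j => ⟨hp j, hs _⟩⟩, ?_⟩
      have := (content_iff _ _).1 hc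
      rw [this]
      refine Finset.sum_congr rfl fun v _ => ?_
      refine Fin.cases ?_ (fun j => ?_) v <;> simp
    · apply Subtype.ext
      exact Fin.cons_self_tail κ

/-- Cho–van Willigenburg star formula.  For every `n ≥ 0`, the
chromatic symmetric function of the star graph on `n + 1` vertices satisfies
`X_{S_{n+1}} = Σ_{i=0}^{n} (−1)^i (n choose i) p_{(i+1, 1^{n−i})}`, where
`(i+1, 1^{n−i})` is the partition with one part equal to `i + 1` and `n − i` parts
equal to `1`. -/
theorem XG_star (n : ℕ) :
    XG (starGraph n) =
      ∑ i ∈ Finset.range (n + 1),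
        ((-1 : ℚ) ^ i * (n.choose i : ℚ)) •
          psumProd ((i + 1) :: List.replicate (n - i) 1) := by
  ext d
  rw [XG_coeff, map_sum, map_sum]
  have hR : ∀ i, MvPowerSeries.coeff d (psumProd ((i + 1) :: List.replicate (n - i) 1)) =
      MvPowerSeries.coeff d ((∑ c ∈ d.support, (MvPowerSeries.X c : MvPowerSeries ℕ ℚ) ^ (i + 1)) *
        (∑ c ∈ d.support, (MvPowerSeries.X c : MvPowerSeries ℕ ℚ)) ^ (n - i)) := by
    intro i
    have h1 := psum_rel d.support 1 one_pos
    simp only [pow_one] at h1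
    have := (psum_rel d.support (i + 1) (Nat.succ_pos i)).mul (h1.pow (n - i)) d subset_rfl
    simpa [psumProd] using this
  simp only [map_smul, hR]
  simp only [← map_smul]
  rw [← map_sum, ← map_sum]
  congr 1
  simp only [Finset.sum_mul, Finset.smul_sum]
  rw [Finset.sum_comm]
  refine Finset.sum_congr rfl fun c hc => ?_
  have : ∑ b ∈ d.support.erase c, (MvPowerSeries.X b : MvPowerSeries ℕ ℚ) =
      -MvPowerSeries.X c + ∑ b ∈ d.support, MvPowerSeries.X b := by
    rw [← Finset.add_sum_erase _ _ hc]; ring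
  rw [this, add_pow, Finset.mul_sum]
  refine Finset.sum_congr rfl fun i _ => ?_
  rw [Algebra.smul_def, neg_pow]
  simp only [map_mul, map_pow, map_neg, map_one, map_natCast]
  ring

end
end
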